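/- Let H be a quasi-Hopf algebra, (𝔄, ρ, Φ_ρ) a right H-comodule algebra, and let 𝒱 = 𝔄⊗H and 𝒰 = H⊗𝔄 carry the two-sided (𝔄,H)-Hopf module structures ρ_𝒱(a⊗h) = ∑aX̃¹_ρ⊗h₁X̃²_ρ⊗h₂X̃³_ρ (with h≻(a⊗h') = a⊗hh', (a⊗h)≺a' = ∑aa'⟨0⟩⊗ha'⟨1⟩) and ρ_𝒰(h⊗a) = ∑h₁S⁻¹(q²_L X̃³₂ g²)⊗X̃¹a⟨0⟩⊗h₂S⁻¹(q¹_L X̃³₁ g¹)X̃²a⟨1⟩ (with h≻(h'⊗a) = hh'⊗a, (h⊗a)≺a' = h⊗aa'). Then θ: 𝒱 → 𝒰 given by θ(a⊗h) = ∑ h S⁻¹(a⟨1⟩ p̃²_ρ) ⊗ a⟨0⟩ p̃¹_ρ is an isomorphism of two-sided (𝔄,H)-Hopf modules (left H-linear, right 𝔄-linear and right H-colinear), with inverse θ⁻¹(h⊗a) = ∑ q̃¹_ρ a⟨0⟩ ⊗ h q̃²_ρ a⟨1⟩. -/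

import Mathlib

open TensorProduct Finset

noncomputable section

/-- A quasi-bialgebra in the sense of Drinfeld, together with chosen finite
Sweedler-type families representing the comultiplication and the reassociator. -/
structure QuasiBialgebra (k : Type*) [Field k] (H : Type*) [Ring H] [Algebra k H] where
  comul : H →ₐ[k] H ⊗[k] H
  counit : H →ₐ[k] k
  nD : ℕ
  D1 : H → ℕ → H
  D2 : H → ℕ → H
  hcomul : ∀ h, comul h = ∑ i ∈ range nD, D1 h i ⊗ₜ[k] D2 h i
  nP : ℕ
  X1 : ℕ → H
  X2 : ℕ → H
  X3 : ℕ → H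
  nQ : ℕ
  x1 : ℕ → H
  x2 : ℕ → H
  x3 : ℕ → H
  P_inv : ∑ s ∈ range nP, ∑ q ∈ range nQ,
      (X1 s * x1 q) ⊗ₜ[k] ((X2 s * x2 q) ⊗ₜ[k] (X3 s * x3 q)) =
      (1 : H) ⊗ₜ[k] ((1 : H) ⊗ₜ[k] (1 : H))
  inv_P : ∑ q ∈ range nQ, ∑ s ∈ range nP,
      (x1 q * X1 s) ⊗ₜ[k] ((x2 q * X2 s) ⊗ₜ[k] (x3 q * X3 s)) =
      (1 : H) ⊗ₜ[k] ((1 : H) ⊗ₜ[k] (1 : H))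
  coassoc : ∀ h : H,
    ∑ i ∈ range nD, ∑ j ∈ range nD,
      D1 h i ⊗ₜ[k] (D1 (D2 h i) j ⊗ₜ[k] D2 (D2 h i) j) =
    ∑ s ∈ range nP, ∑ i ∈ range nD, ∑ j ∈ range nD, ∑ q ∈ range nQ,
      (X1 s * D1 (D1 h i) j * x1 q) ⊗ₜ[k]
        ((X2 s * D2 (D1 h i) j * x2 q) ⊗ₜ[k] (X3 s * D2 h i * x3 q))
  counit_r : ∀ h : H, ∑ i ∈ range nD, counit (D2 h i) • D1 h i = h
  counit_l : ∀ h : H, ∑ i ∈ range nD, counit (D1 h i) • D2 h i = h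
  pentagon :
    ∑ p ∈ range nP, ∑ s ∈ range nP, ∑ l ∈ range nD, ∑ r ∈ range nP,
      (X1 s * X1 r) ⊗ₜ[k] ((X1 p * D1 (X2 s) l * X2 r) ⊗ₜ[k]
        ((X2 p * D2 (X2 s) l * X3 r) ⊗ₜ[k] (X3 p * X3 s))) =
    ∑ p ∈ range nP, ∑ s ∈ range nP, ∑ l ∈ range nD, ∑ j ∈ range nD,
      (X1 p * D1 (X1 s) j) ⊗ₜ[k] ((X2 p * D2 (X1 s) j) ⊗ₜ[k]
        ((D1 (X3 p) l * X2 s) ⊗ₜ[k] (D2 (X3 p) l * X3 s)))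
  normal : ∑ s ∈ range nP, counit (X2 s) • (X1 s ⊗ₜ[k] X3 s) = (1 : H) ⊗ₜ[k] (1 : H)

/-- A quasi-Hopf algebra: a quasi-bialgebra with an anti-automorphism `S`
and elements `aE = α`, `bE = β` satisfying the antipode axioms. -/
structure QuasiHopfAlgebra (k : Type*) [Field k] (H : Type*) [Ring H] [Algebra k H]
    extends QuasiBialgebra k H where
  S : H →ₗ[k] H
  Sinv : H →ₗ[k] H
  S_Sinv : ∀ h, S (Sinv h) = h
  Sinv_S : ∀ h, Sinv (S h) = h
  S_one : S 1 = 1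
  S_mul : ∀ g h : H, S (g * h) = S h * S g
  aE : H
  bE : H
  antip_l : ∀ h, ∑ i ∈ range nD, S (D1 h i) * aE * D2 h i = counit h • aE
  antip_r : ∀ h, ∑ i ∈ range nD, D1 h i * bE * S (D2 h i) = counit h • bE
  antip_X : ∑ s ∈ range nP, X1 s * bE * S (X2 s) * aE * X3 s = 1
  antip_x : ∑ q ∈ range nQ, S (x1 q) * aE * x2 q * bE * S (x3 q) = 1

/-- The Drinfeld twist `f` of a quasi-Hopf algebra, given by families `f₁ ⊗ f₂`
with inverse `g₁ ⊗ g₂`, together with its defining formula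
`f = ∑ (S⊗S)(Δᵒᵖ(x¹)) γ Δ(x²βS(x³))`, `γ = ∑ S(A²)αA³ ⊗ S(A¹)αA⁴`,
`∑A¹⊗A²⊗A³⊗A⁴ = (Φ⊗1)(Δ⊗id⊗id)(Φ⁻¹)`. -/
structure DrinfeldTwist {k : Type*} [Field k] {H : Type*} [Ring H] [Algebra k H]
    (QH : QuasiHopfAlgebra k H) where
  nf : ℕ
  f1 : ℕ → H
  f2 : ℕ → H
  g1 : ℕ → H
  g2 : ℕ → H
  f_inv : ∑ t ∈ range nf, ∑ u ∈ range nf,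
      (f1 t * g1 u) ⊗ₜ[k] (f2 t * g2 u) = (1 : H) ⊗ₜ[k] (1 : H)
  inv_f : ∑ u ∈ range nf, ∑ t ∈ range nf,
      (g1 u * f1 t) ⊗ₜ[k] (g2 u * f2 t) = (1 : H) ⊗ₜ[k] (1 : H)
  h_f : ∑ t ∈ range nf, f1 t ⊗ₜ[k] f2 t =
    ∑ j ∈ range QH.nQ, ∑ l ∈ range QH.nD, ∑ p ∈ range QH.nP, ∑ j' ∈ range QH.nQ,
      ∑ l' ∈ range QH.nD, ∑ l'' ∈ range QH.nD,
      (QH.S (QH.D2 (QH.x1 j) l) *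
          (QH.S (QH.X2 p * QH.D2 (QH.x1 j') l') * QH.aE * (QH.X3 p * QH.x2 j')) *
          QH.D1 (QH.x2 j * QH.bE * QH.S (QH.x3 j)) l'') ⊗ₜ[k]
        (QH.S (QH.D1 (QH.x1 j) l) *
          (QH.S (QH.X1 p * QH.D1 (QH.x1 j') l') * QH.aE * QH.x3 j') *
          QH.D2 (QH.x2 j * QH.bE * QH.S (QH.x3 j)) l'')

/-- A right `H`-comodule algebra over a quasi-bialgebra, with Sweedler families. -/
structure RightComoduleAlgebra {k : Type*} [Field k] {H : Type*} [Ring H] [Algebra k H]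
    (QB : QuasiBialgebra k H) (A : Type*) [Ring A] [Algebra k A] where
  rho : A →ₐ[k] A ⊗[k] H
  nR : ℕ
  r0 : A → ℕ → A
  r1 : A → ℕ → H
  hrho : ∀ a, rho a = ∑ i ∈ range nR, r0 a i ⊗ₜ[k] r1 a i
  nP : ℕ
  P1 : ℕ → A
  P2 : ℕ → H
  P3 : ℕ → H
  nQ : ℕ
  Q1 : ℕ → A
  Q2 : ℕ → H
  Q3 : ℕ → H
  P_inv : ∑ s ∈ range nP, ∑ q ∈ range nQ,
      (P1 s * Q1 q) ⊗ₜ[k] ((P2 s * Q2 q) ⊗ₜ[k] (P3 s * Q3 q)) =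
      (1 : A) ⊗ₜ[k] ((1 : H) ⊗ₜ[k] (1 : H))
  inv_P : ∑ q ∈ range nQ, ∑ s ∈ range nP,
      (Q1 q * P1 s) ⊗ₜ[k] ((Q2 q * P2 s) ⊗ₜ[k] (Q3 q * P3 s)) =
      (1 : A) ⊗ₜ[k] ((1 : H) ⊗ₜ[k] (1 : H))
  rca1 : ∀ a : A,
    ∑ s ∈ range nP, ∑ i ∈ range nR, ∑ j ∈ range nR,
      (P1 s * r0 (r0 a i) j) ⊗ₜ[k] ((P2 s * r1 (r0 a i) j) ⊗ₜ[k] (P3 s * r1 a i)) =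
    ∑ i ∈ range nR, ∑ l ∈ range QB.nD, ∑ s ∈ range nP,
      (r0 a i * P1 s) ⊗ₜ[k] ((QB.D1 (r1 a i) l * P2 s) ⊗ₜ[k] (QB.D2 (r1 a i) l * P3 s))
  rca2 :
    ∑ s ∈ range QB.nP, ∑ i ∈ range nP, ∑ l ∈ range QB.nD, ∑ j ∈ range nP,
      (P1 i * P1 j) ⊗ₜ[k] ((QB.X1 s * QB.D1 (P2 i) l * P2 j) ⊗ₜ[k]
        ((QB.X2 s * QB.D2 (P2 i) l * P3 j) ⊗ₜ[k] (QB.X3 s * P3 i))) =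
    ∑ i ∈ range nP, ∑ l ∈ range QB.nD, ∑ j ∈ range nP, ∑ u ∈ range nR,
      (P1 i * r0 (P1 j) u) ⊗ₜ[k] ((P2 i * r1 (P1 j) u) ⊗ₜ[k]
        ((QB.D1 (P3 i) l * P2 j) ⊗ₜ[k] (QB.D2 (P3 i) l * P3 j)))
  rca3 : ∀ a, ∑ i ∈ range nR, QB.counit (r1 a i) • r0 a i = a
  rca4a : ∑ s ∈ range nP, QB.counit (P2 s) • (P1 s ⊗ₜ[k] P3 s) = (1 : A) ⊗ₜ[k] (1 : H)
  rca4b : ∑ s ∈ range nP, QB.counit (P3 s) • (P1 s ⊗ₜ[k] P2 s) = (1 : A) ⊗ₜ[k] (1 : H)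

/-- A left `H`-comodule algebra over a quasi-bialgebra, with Sweedler families. -/
structure LeftComoduleAlgebra {k : Type*} [Field k] {H : Type*} [Ring H] [Algebra k H]
    (QB : QuasiBialgebra k H) (B : Type*) [Ring B] [Algebra k B] where
  lam : B →ₐ[k] H ⊗[k] B
  nL : ℕ
  l1 : B → ℕ → H
  l0 : B → ℕ → B
  hlam : ∀ b, lam b = ∑ i ∈ range nL, l1 b i ⊗ₜ[k] l0 b i
  nP : ℕ
  P1 : ℕ → H
  P2 : ℕ → H
  P3 : ℕ → B
  nQ : ℕ
  Q1 : ℕ → H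
  Q2 : ℕ → H
  Q3 : ℕ → B
  P_inv : ∑ s ∈ range nP, ∑ q ∈ range nQ,
      (P1 s * Q1 q) ⊗ₜ[k] ((P2 s * Q2 q) ⊗ₜ[k] (P3 s * Q3 q)) =
      (1 : H) ⊗ₜ[k] ((1 : H) ⊗ₜ[k] (1 : B))
  inv_P : ∑ q ∈ range nQ, ∑ s ∈ range nP,
      (Q1 q * P1 s) ⊗ₜ[k] ((Q2 q * P2 s) ⊗ₜ[k] (Q3 q * P3 s)) =
      (1 : H) ⊗ₜ[k] ((1 : H) ⊗ₜ[k] (1 : B))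
  lca1 : ∀ b : B,
    ∑ i ∈ range nL, ∑ l ∈ range nL, ∑ s ∈ range nP,
      (l1 b i * P1 s) ⊗ₜ[k] ((l1 (l0 b i) l * P2 s) ⊗ₜ[k] (l0 (l0 b i) l * P3 s)) =
    ∑ s ∈ range nP, ∑ i ∈ range nL, ∑ l ∈ range QB.nD,
      (P1 s * QB.D1 (l1 b i) l) ⊗ₜ[k] ((P2 s * QB.D2 (l1 b i) l) ⊗ₜ[k] (P3 s * l0 b i))
  lca2 :
    ∑ p ∈ range nP, ∑ s ∈ range nP, ∑ l ∈ range QB.nD, ∑ r ∈ range QB.nP,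
      (P1 s * QB.X1 r) ⊗ₜ[k] ((P1 p * QB.D1 (P2 s) l * QB.X2 r) ⊗ₜ[k]
        ((P2 p * QB.D2 (P2 s) l * QB.X3 r) ⊗ₜ[k] (P3 p * P3 s))) =
    ∑ p ∈ range nP, ∑ s ∈ range nP, ∑ j ∈ range QB.nD, ∑ l ∈ range nL,
      (P1 p * QB.D1 (P1 s) j) ⊗ₜ[k] ((P2 p * QB.D2 (P1 s) j) ⊗ₜ[k]
        ((l1 (P3 p) l * P2 s) ⊗ₜ[k] (l0 (P3 p) l * P3 s)))
  lca3 : ∀ b, ∑ i ∈ range nL, QB.counit (l1 b i) • l0 b i = b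
  lca4a : ∑ s ∈ range nP, QB.counit (P2 s) • (P1 s ⊗ₜ[k] P3 s) = (1 : H) ⊗ₜ[k] (1 : B)
  lca4b : ∑ s ∈ range nP, QB.counit (P1 s) • (P2 s ⊗ₜ[k] P3 s) = (1 : H) ⊗ₜ[k] (1 : B)

/-- An algebra in the monoidal category of left `H`-modules
(a left `H`-module algebra), on a carrier `V`. -/
structure LeftModuleAlgebra {k : Type*} [Field k] {H : Type*} [Ring H] [Algebra k H]
    (QB : QuasiBialgebra k H) (V : Type*) [AddCommMonoid V] [Module k V] where
  mul : V →ₗ[k] V →ₗ[k] V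
  one : V
  act : H →ₗ[k] V →ₗ[k] V
  act_one : ∀ v, act 1 v = v
  act_mul : ∀ g h v, act (g * h) v = act g (act h v)
  mul_one : ∀ v, mul v one = v
  one_mul : ∀ v, mul one v = v
  mul_assoc : ∀ u v w, mul (mul u v) w =
    ∑ s ∈ range QB.nP, mul (act (QB.X1 s) u) (mul (act (QB.X2 s) v) (act (QB.X3 s) w))
  act_mul_mul : ∀ h u v, act h (mul u v) =
    ∑ i ∈ range QB.nD, mul (act (QB.D1 h i) u) (act (QB.D2 h i) v)
  act_unit : ∀ h, act h one = QB.counit h • one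

/-- The right action `φ ↦ h ⇀ φ`, `(h ⇀ φ)(h') = φ(h'h)`. -/
def rA (k : Type*) [Field k] {H : Type*} [Ring H] [Algebra k H] (h : H) :
    Module.Dual k H →ₗ[k] Module.Dual k H :=
  LinearMap.lcomp k k (LinearMap.mulRight k h)

/-- The left action `φ ↦ φ ↼ h`, `(φ ↼ h)(h') = φ(hh')`. -/
def lA (k : Type*) [Field k] {H : Type*} [Ring H] [Algebra k H] (h : H) :
    Module.Dual k H →ₗ[k] Module.Dual k H :=
  LinearMap.lcomp k k (LinearMap.mulLeft k h)

/-- Convolution product on the dual of a "coalgebra" with comultiplication `DC`. -/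
def convC {k : Type*} [Field k] {C : Type*} [AddCommGroup C] [Module k C]
    (DC : C →ₗ[k] C ⊗[k] C) (φ ψ : Module.Dual k C) : Module.Dual k C :=
  (TensorProduct.lid k k).toLinearMap ∘ₗ (TensorProduct.map φ ψ) ∘ₗ DC

/-- A two-sided `(𝔄, H)`-Hopf module. -/
structure TwoSidedHopfModule {k : Type*} [Field k] {H : Type*} [Ring H] [Algebra k H]
    (QB : QuasiBialgebra k H) {A : Type*} [Ring A] [Algebra k A]
    (CA : RightComoduleAlgebra QB A) (M : Type*) [AddCommGroup M] [Module k M] where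
  ha : H →ₗ[k] M →ₗ[k] M
  ha_one : ∀ m, ha 1 m = m
  ha_mul : ∀ g h m, ha (g * h) m = ha g (ha h m)
  ra : A →ₗ[k] M →ₗ[k] M
  ra_one : ∀ m, ra 1 m = m
  ra_mul : ∀ a b m, ra (a * b) m = ra b (ra a m)
  ha_ra : ∀ h a m, ha h (ra a m) = ra a (ha h m)
  rho : M →ₗ[k] M ⊗[k] H
  counit_rho : ∀ m,
    (TensorProduct.rid k M) ((TensorProduct.map LinearMap.id QB.counit.toLinearMap) (rho m)) = m
  coassoc_rho : ∀ m,
    ∑ s ∈ range QB.nP,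
      (TensorProduct.map (ha (QB.X1 s))
        (TensorProduct.map (LinearMap.mulLeft k (QB.X2 s)) (LinearMap.mulLeft k (QB.X3 s))))
        ((TensorProduct.assoc k M H H) ((TensorProduct.map rho LinearMap.id) (rho m))) =
    ∑ j ∈ range CA.nP,
      (TensorProduct.map (ra (CA.P1 j))
        (TensorProduct.map (LinearMap.mulRight k (CA.P2 j)) (LinearMap.mulRight k (CA.P3 j))))
        ((TensorProduct.map LinearMap.id QB.comul.toLinearMap) (rho m))
  colin_l : ∀ h m, rho (ha h m) =
    ∑ i ∈ range QB.nD,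
      (TensorProduct.map (ha (QB.D1 h i)) (LinearMap.mulLeft k (QB.D2 h i))) (rho m)
  colin_r : ∀ a m, rho (ra a m) =
    ∑ i ∈ range CA.nR,
      (TensorProduct.map (ra (CA.r0 a i)) (LinearMap.mulRight k (CA.r1 a i))) (rho m)

/-- A right `(H^*, A)`-Hopf module over a left `H`-module algebra `A` (carrier `V`). -/
structure RelHopfModule {k : Type*} [Field k] {H : Type*} [Ring H] [Algebra k H]
    (QB : QuasiBialgebra k H) {V : Type*} [AddCommMonoid V] [Module k V]
    (MA : LeftModuleAlgebra QB V) (M : Type*) [AddCommGroup M] [Module k M] where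
  hb : H →ₗ[k] M →ₗ[k] M
  hb_one : ∀ m, hb 1 m = m
  hb_mul : ∀ g h m, hb (g * h) m = hb g (hb h m)
  rb : V →ₗ[k] M →ₗ[k] M
  rb_one : ∀ m, rb MA.one m = m
  rb_assoc : ∀ m u v, rb v (rb u m) =
    ∑ s ∈ range QB.nP, rb (MA.mul (MA.act (QB.X2 s) u) (MA.act (QB.X3 s) v)) (hb (QB.X1 s) m)
  hb_rb : ∀ h u m, hb h (rb u m) =
    ∑ i ∈ range QB.nD, rb (MA.act (QB.D2 h i) u) (hb (QB.D1 h i) m)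

/-- A right module over the (possibly nonassociative) algebra `(V, mul, one)`. -/
structure RightAlgModule (k : Type*) [Field k] {V : Type*} [AddCommMonoid V] [Module k V]
    (mul : V →ₗ[k] V →ₗ[k] V) (one : V) (N : Type*) [AddCommGroup N] [Module k N] where
  ract : V →ₗ[k] N →ₗ[k] N
  ract_one : ∀ n, ract one n = n
  ract_mul : ∀ u v n, ract (mul u v) n = ract v (ract u n)

/-- A left `H'`-comodule algebra structure on a carrier `V` equipped with a
(bilinear, possibly nonassociative) multiplication `mulV` and unit `oneV`. -/
structure LeftComoduleAlgebraS {k : Type*} [Field k] {H' : Type*} [Ring H'] [Algebra k H']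
    (QB : QuasiBialgebra k H') (V : Type*) [AddCommMonoid V] [Module k V]
    (mulV : V →ₗ[k] V →ₗ[k] V) (oneV : V) where
  lam : V →ₗ[k] H' ⊗[k] V
  nL : ℕ
  l1 : V → ℕ → H'
  l0 : V → ℕ → V
  hlam : ∀ v, lam v = ∑ i ∈ range nL, l1 v i ⊗ₜ[k] l0 v i
  lam_one : lam oneV = (1 : H') ⊗ₜ[k] oneV
  lam_mul : ∀ u v, lam (mulV u v) =
    ∑ i ∈ range nL, ∑ j ∈ range nL, (l1 u i * l1 v j) ⊗ₜ[k] mulV (l0 u i) (l0 v j)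
  nP : ℕ
  P1 : ℕ → H'
  P2 : ℕ → H'
  P3 : ℕ → V
  nQ : ℕ
  Q1 : ℕ → H'
  Q2 : ℕ → H'
  Q3 : ℕ → V
  P_inv : ∑ s ∈ range nP, ∑ q ∈ range nQ,
      (P1 s * Q1 q) ⊗ₜ[k] ((P2 s * Q2 q) ⊗ₜ[k] mulV (P3 s) (Q3 q)) =
      (1 : H') ⊗ₜ[k] ((1 : H') ⊗ₜ[k] oneV)
  inv_P : ∑ q ∈ range nQ, ∑ s ∈ range nP,
      (Q1 q * P1 s) ⊗ₜ[k] ((Q2 q * P2 s) ⊗ₜ[k] mulV (Q3 q) (P3 s)) =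
      (1 : H') ⊗ₜ[k] ((1 : H') ⊗ₜ[k] oneV)
  lca1 : ∀ v : V,
    ∑ i ∈ range nL, ∑ l ∈ range nL, ∑ s ∈ range nP,
      (l1 v i * P1 s) ⊗ₜ[k] ((l1 (l0 v i) l * P2 s) ⊗ₜ[k] mulV (l0 (l0 v i) l) (P3 s)) =
    ∑ s ∈ range nP, ∑ i ∈ range nL, ∑ l ∈ range QB.nD,
      (P1 s * QB.D1 (l1 v i) l) ⊗ₜ[k] ((P2 s * QB.D2 (l1 v i) l) ⊗ₜ[k] mulV (P3 s) (l0 v i))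
  lca2 :
    ∑ p ∈ range nP, ∑ s ∈ range nP, ∑ l ∈ range QB.nD, ∑ r ∈ range QB.nP,
      (P1 s * QB.X1 r) ⊗ₜ[k] ((P1 p * QB.D1 (P2 s) l * QB.X2 r) ⊗ₜ[k]
        ((P2 p * QB.D2 (P2 s) l * QB.X3 r) ⊗ₜ[k] mulV (P3 p) (P3 s))) =
    ∑ p ∈ range nP, ∑ s ∈ range nP, ∑ j ∈ range QB.nD, ∑ l ∈ range nL,
      (P1 p * QB.D1 (P1 s) j) ⊗ₜ[k] ((P2 p * QB.D2 (P1 s) j) ⊗ₜ[k]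
        ((l1 (P3 p) l * P2 s) ⊗ₜ[k] mulV (l0 (P3 p) l) (P3 s)))
  lca3 : ∀ v, ∑ i ∈ range nL, QB.counit (l1 v i) • l0 v i = v
  lca4a : ∑ s ∈ range nP, QB.counit (P2 s) • (P1 s ⊗ₜ[k] P3 s) = (1 : H') ⊗ₜ[k] oneV
  lca4b : ∑ s ∈ range nP, QB.counit (P1 s) • (P2 s ⊗ₜ[k] P3 s) = (1 : H') ⊗ₜ[k] oneV

/-- A right-left Doi-Hopf module over the quasi-bialgebra `QB'`, a left comodule
algebra (given by its carrier `V`, multiplication data and coaction families) and a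
module coalgebra `C` (given by its comultiplication `DC`, counit `eC` and right
`H'`-action `actC`). -/
structure DoiHopfModule {k : Type*} [Field k] {H' : Type*} [Ring H'] [Algebra k H']
    (QB' : QuasiBialgebra k H') {V : Type*} [AddCommMonoid V] [Module k V]
    (mulV : V →ₗ[k] V →ₗ[k] V) (oneV : V)
    (nL : ℕ) (l1 : V → ℕ → H') (l0 : V → ℕ → V)
    (nPl : ℕ) (Pl1 Pl2 : ℕ → H') (Pl3 : ℕ → V)
    {C : Type*} [AddCommGroup C] [Module k C]
    (DC : C →ₗ[k] C ⊗[k] C) (eC : C →ₗ[k] k) (actC : H' →ₗ[k] C →ₗ[k] C)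
    (N : Type*) [AddCommGroup N] [Module k N] where
  ract : V →ₗ[k] N →ₗ[k] N
  ract_one : ∀ n, ract oneV n = n
  ract_mul : ∀ u v n, ract (mulV u v) n = ract v (ract u n)
  rhoN : N →ₗ[k] C ⊗[k] N
  dh2 : ∀ n, (TensorProduct.lid k N) ((TensorProduct.map eC LinearMap.id) (rhoN n)) = n
  dh1 : ∀ n,
    (TensorProduct.assoc k C C N) ((TensorProduct.map DC LinearMap.id) (rhoN n)) =
    ∑ j ∈ range nPl,
      (TensorProduct.map (actC (Pl1 j)) (TensorProduct.map (actC (Pl2 j)) (ract (Pl3 j))))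
        ((TensorProduct.map LinearMap.id rhoN) (rhoN n))
  dh3 : ∀ v n, rhoN (ract v n) =
    ∑ w ∈ range nL, (TensorProduct.map (actC (l1 v w)) (ract (l0 v w))) (rhoN n)

/-- A right `H`-module coalgebra, with Sweedler families for the comultiplication. -/
structure RightModuleCoalgebra {k : Type*} [Field k] {H : Type*} [Ring H] [Algebra k H]
    (QB : QuasiBialgebra k H) (C : Type*) [AddCommGroup C] [Module k C] where
  act : H →ₗ[k] C →ₗ[k] C
  act_one : ∀ c, act 1 c = c
  act_mul : ∀ g h c, act (g * h) c = act h (act g c)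
  DC : C →ₗ[k] C ⊗[k] C
  nC : ℕ
  C1 : C → ℕ → C
  C2 : C → ℕ → C
  hDC : ∀ c, DC c = ∑ i ∈ range nC, C1 c i ⊗ₜ[k] C2 c i
  eC : C →ₗ[k] k
  counit_l : ∀ c, ∑ i ∈ range nC, eC (C1 c i) • C2 c i = c
  counit_r : ∀ c, ∑ i ∈ range nC, eC (C2 c i) • C1 c i = c
  rmc1 : ∀ c : C,
    ∑ i ∈ range nC, ∑ j ∈ range nC, ∑ q ∈ range QB.nQ,
      act (QB.x1 q) (C1 (C1 c i) j) ⊗ₜ[k]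
        (act (QB.x2 q) (C2 (C1 c i) j) ⊗ₜ[k] act (QB.x3 q) (C2 c i)) =
    ∑ i ∈ range nC, ∑ j ∈ range nC,
      C1 c i ⊗ₜ[k] (C1 (C2 c i) j ⊗ₜ[k] C2 (C2 c i) j)
  rmc2 : ∀ c h,
    ∑ i ∈ range nC, C1 (act h c) i ⊗ₜ[k] C2 (act h c) i =
    ∑ i ∈ range nC, ∑ l ∈ range QB.nD,
      act (QB.D1 h l) (C1 c i) ⊗ₜ[k] act (QB.D2 h l) (C2 c i)
  rmc3 : ∀ c h, eC (act h c) = eC c * QB.counit h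

/-- An `H`-bimodule coalgebra: a coalgebra in the monoidal category of
`(H,H)`-bimodules, with Sweedler families. -/
structure HBimoduleCoalgebra {k : Type*} [Field k] {H : Type*} [Ring H] [Algebra k H]
    (QB : QuasiBialgebra k H) (C : Type*) [AddCommGroup C] [Module k C] where
  lact : H →ₗ[k] C →ₗ[k] C
  lact_one : ∀ c, lact 1 c = c
  lact_mul : ∀ g h c, lact (g * h) c = lact g (lact h c)
  ract : H →ₗ[k] C →ₗ[k] C
  ract_one : ∀ c, ract 1 c = c
  ract_mul : ∀ g h c, ract (g * h) c = ract h (ract g c)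
  lact_ract : ∀ g h c, lact g (ract h c) = ract h (lact g c)
  DC : C →ₗ[k] C ⊗[k] C
  nC : ℕ
  C1 : C → ℕ → C
  C2 : C → ℕ → C
  hDC : ∀ c, DC c = ∑ i ∈ range nC, C1 c i ⊗ₜ[k] C2 c i
  eC : C →ₗ[k] k
  counit_l : ∀ c, ∑ i ∈ range nC, eC (C1 c i) • C2 c i = c
  counit_r : ∀ c, ∑ i ∈ range nC, eC (C2 c i) • C1 c i = c
  bmc1 : ∀ c : C,
    ∑ s ∈ range QB.nP, ∑ i ∈ range nC, ∑ j ∈ range nC, ∑ q ∈ range QB.nQ,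
      lact (QB.X1 s) (ract (QB.x1 q) (C1 (C1 c i) j)) ⊗ₜ[k]
        (lact (QB.X2 s) (ract (QB.x2 q) (C2 (C1 c i) j)) ⊗ₜ[k]
          lact (QB.X3 s) (ract (QB.x3 q) (C2 c i))) =
    ∑ i ∈ range nC, ∑ j ∈ range nC,
      C1 c i ⊗ₜ[k] (C1 (C2 c i) j ⊗ₜ[k] C2 (C2 c i) j)
  bmc2l : ∀ c h,
    ∑ i ∈ range nC, C1 (lact h c) i ⊗ₜ[k] C2 (lact h c) i =
    ∑ l ∈ range QB.nD, ∑ i ∈ range nC,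
      lact (QB.D1 h l) (C1 c i) ⊗ₜ[k] lact (QB.D2 h l) (C2 c i)
  bmc2r : ∀ c h,
    ∑ i ∈ range nC, C1 (ract h c) i ⊗ₜ[k] C2 (ract h c) i =
    ∑ l ∈ range QB.nD, ∑ i ∈ range nC,
      ract (QB.D1 h l) (C1 c i) ⊗ₜ[k] ract (QB.D2 h l) (C2 c i)
  bmc3l : ∀ c h, eC (lact h c) = QB.counit h * eC c
  bmc3r : ∀ c h, eC (ract h c) = eC c * QB.counit h

/-- An `H`-bicomodule algebra `(𝔸, λ, ρ, Φ_λ, Φ_ρ, Φ_{λ,ρ})`. -/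
structure BicomoduleAlgebra {k : Type*} [Field k] {H : Type*} [Ring H] [Algebra k H]
    (QB : QuasiBialgebra k H) (A : Type*) [Ring A] [Algebra k A] where
  rca : RightComoduleAlgebra QB A
  lca : LeftComoduleAlgebra QB A
  nO : ℕ
  O1 : ℕ → H
  O2 : ℕ → A
  O3 : ℕ → H
  nW : ℕ
  w1 : ℕ → H
  w2 : ℕ → A
  w3 : ℕ → H
  O_inv : ∑ v ∈ range nO, ∑ w ∈ range nW,
      (O1 v * w1 w) ⊗ₜ[k] ((O2 v * w2 w) ⊗ₜ[k] (O3 v * w3 w)) =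
      (1 : H) ⊗ₜ[k] ((1 : A) ⊗ₜ[k] (1 : H))
  inv_O : ∑ w ∈ range nW, ∑ v ∈ range nO,
      (w1 w * O1 v) ⊗ₜ[k] ((w2 w * O2 v) ⊗ₜ[k] (w3 w * O3 v)) =
      (1 : H) ⊗ₜ[k] ((1 : A) ⊗ₜ[k] (1 : H))
  bca1 : ∀ a : A,
    ∑ v ∈ range nO, ∑ r ∈ range rca.nR, ∑ l ∈ range lca.nL,
      (O1 v * lca.l1 (rca.r0 a r) l) ⊗ₜ[k]
        ((O2 v * lca.l0 (rca.r0 a r) l) ⊗ₜ[k] (O3 v * rca.r1 a r)) =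
    ∑ l ∈ range lca.nL, ∑ r ∈ range rca.nR, ∑ v ∈ range nO,
      (lca.l1 a l * O1 v) ⊗ₜ[k]
        ((rca.r0 (lca.l0 a l) r * O2 v) ⊗ₜ[k] (rca.r1 (lca.l0 a l) r * O3 v))
  bca2 :
    ∑ v ∈ range nO, ∑ v' ∈ range nO, ∑ l ∈ range lca.nL, ∑ j ∈ range lca.nP,
      (O1 v' * lca.P1 j) ⊗ₜ[k] ((O1 v * lca.l1 (O2 v') l * lca.P2 j) ⊗ₜ[k]
        ((O2 v * lca.l0 (O2 v') l * lca.P3 j) ⊗ₜ[k] (O3 v * O3 v'))) =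
    ∑ j ∈ range lca.nP, ∑ v ∈ range nO, ∑ i ∈ range QB.nD, ∑ r ∈ range rca.nR,
      (lca.P1 j * QB.D1 (O1 v) i) ⊗ₜ[k] ((lca.P2 j * QB.D2 (O1 v) i) ⊗ₜ[k]
        ((rca.r0 (lca.P3 j) r * O2 v) ⊗ₜ[k] (rca.r1 (lca.P3 j) r * O3 v)))
  bca3 :
    ∑ s ∈ range rca.nP, ∑ v ∈ range nO, ∑ r ∈ range rca.nR, ∑ v' ∈ range nO,
      (O1 v * O1 v') ⊗ₜ[k] ((rca.P1 s * rca.r0 (O2 v) r * O2 v') ⊗ₜ[k]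
        ((rca.P2 s * rca.r1 (O2 v) r * O3 v') ⊗ₜ[k] (rca.P3 s * O3 v))) =
    ∑ v ∈ range nO, ∑ i ∈ range QB.nD, ∑ s ∈ range rca.nP, ∑ l ∈ range lca.nL,
      (O1 v * lca.l1 (rca.P1 s) l) ⊗ₜ[k] ((O2 v * lca.l0 (rca.P1 s) l) ⊗ₜ[k]
        ((QB.D1 (O3 v) i * rca.P2 s) ⊗ₜ[k] (QB.D2 (O3 v) i * rca.P3 s)))

/-- A two-sided two-cosided `(H, 𝔸, C)`-Hopf module. -/
structure TwoSidedTwoCosided {k : Type*} [Field k] {H : Type*} [Ring H] [Algebra k H]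
    (QB : QuasiBialgebra k H) {A : Type*} [Ring A] [Algebra k A]
    (BA : BicomoduleAlgebra QB A) {C : Type*} [AddCommGroup C] [Module k C]
    (lactC ractC : H →ₗ[k] C →ₗ[k] C) (DC : C →ₗ[k] C ⊗[k] C) (eC : C →ₗ[k] k)
    (N : Type*) [AddCommGroup N] [Module k N]
    extends TwoSidedHopfModule QB BA.rca N where
  rhoC : N →ₗ[k] C ⊗[k] N
  counit_rhoC : ∀ n,
    (TensorProduct.lid k N) ((TensorProduct.map eC LinearMap.id) (rhoC n)) = n
  tstc1 : ∀ n,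
    ∑ s ∈ range QB.nP,
      (TensorProduct.map (lactC (QB.X1 s))
        (TensorProduct.map (lactC (QB.X2 s)) (ha (QB.X3 s))))
        ((TensorProduct.assoc k C C N) ((TensorProduct.map DC LinearMap.id) (rhoC n))) =
    ∑ j ∈ range BA.lca.nP,
      (TensorProduct.map (ractC (BA.lca.P1 j))
        (TensorProduct.map (ractC (BA.lca.P2 j)) (ra (BA.lca.P3 j))))
        ((TensorProduct.map LinearMap.id rhoC) (rhoC n))
  tstc2 : ∀ n,
    ∑ s ∈ range QB.nP,
      (TensorProduct.map (lactC (QB.X1 s))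
        (TensorProduct.map (ha (QB.X2 s)) (LinearMap.mulLeft k (QB.X3 s))))
        ((TensorProduct.assoc k C N H) ((TensorProduct.map rhoC LinearMap.id) (rho n))) =
    ∑ v ∈ range BA.nO,
      (TensorProduct.map (ractC (BA.O1 v))
        (TensorProduct.map (ra (BA.O2 v)) (LinearMap.mulRight k (BA.O3 v))))
        ((TensorProduct.map LinearMap.id rho) (rhoC n))
  tstc3 : ∀ h n, rhoC (ha h n) =
    ∑ i ∈ range QB.nD,
      (TensorProduct.map (lactC (QB.D1 h i)) (ha (QB.D2 h i))) (rhoC n)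
  tstc4 : ∀ a n, rhoC (ra a n) =
    ∑ l ∈ range BA.lca.nL,
      (TensorProduct.map (ractC (BA.lca.l1 a l)) (ra (BA.lca.l0 a l))) (rhoC n)

section ThetaIsomorphism

set_option maxSynthPendingDepth 6

/-! ### Leg-wise operations on tensor powers -/

section TensorLegs

variable {k : Type*} [Field k] {H : Type*} [Ring H] [Algebra k H] {A : Type*} [Ring A] [Algebra k A]

/-- The map `δ ⊗ id` on `A ⊗ H`. -/
def legOneTwo (δ : A →ₐ[k] A ⊗[k] H) : A ⊗[k] H →ₐ[k] A ⊗[k] (H ⊗[k] H) :=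
  (Algebra.TensorProduct.assoc k k k A H H).toAlgHom.comp
    (Algebra.TensorProduct.map δ (AlgHom.id k H))

/-- The map `δ ⊗ id ⊗ id` on `A ⊗ H ⊗ H`. -/
def legOne (δ : A →ₐ[k] A ⊗[k] H) :
    A ⊗[k] (H ⊗[k] H) →ₐ[k] A ⊗[k] (H ⊗[k] (H ⊗[k] H)) :=
  (Algebra.TensorProduct.assoc k k k A H (H ⊗[k] H)).toAlgHom.comp
    (Algebra.TensorProduct.map δ (AlgHom.id k (H ⊗[k] H)))

variable (A) in
/-- The map `id ⊗ δ ⊗ id` on `A ⊗ H ⊗ H`. -/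
def legTwo (δ : H →ₐ[k] H ⊗[k] H) :
    A ⊗[k] (H ⊗[k] H) →ₐ[k] A ⊗[k] (H ⊗[k] (H ⊗[k] H)) :=
  Algebra.TensorProduct.map (AlgHom.id k A) (legOneTwo δ)

variable (A) in
/-- The map `id ⊗ id ⊗ δ` on `A ⊗ H ⊗ H`. -/
def legThree (δ : H →ₐ[k] H ⊗[k] H) :
    A ⊗[k] (H ⊗[k] H) →ₐ[k] A ⊗[k] (H ⊗[k] (H ⊗[k] H)) :=
  Algebra.TensorProduct.map (AlgHom.id k A) (Algebra.TensorProduct.map (AlgHom.id k H) δ)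

variable (k H A) in
/-- The map `z ↦ z ⊗ 1` on `A ⊗ H ⊗ H`. -/
def tensorOne : A ⊗[k] (H ⊗[k] H) →ₐ[k] A ⊗[k] (H ⊗[k] (H ⊗[k] H)) :=
  Algebra.TensorProduct.map (AlgHom.id k A)
    (Algebra.TensorProduct.map (AlgHom.id k H) Algebra.TensorProduct.includeLeft)

variable (k H A) in
/-- The map `z ↦ 1 ⊗ z` on `H ⊗ H ⊗ H`. -/
def oneTensor : H ⊗[k] (H ⊗[k] H) →ₐ[k] A ⊗[k] (H ⊗[k] (H ⊗[k] H)) :=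
  Algebra.TensorProduct.includeRight

/-- The trivial coaction `h ↦ ε(h) 1 ⊗ 1`. -/
def unitCounit (ε : H →ₐ[k] k) : H →ₐ[k] H ⊗[k] H :=
  (Algebra.ofId k (H ⊗[k] H)).comp ε

theorem unitCounit_apply (ε : H →ₐ[k] k) (h : H) :
    unitCounit ε h = ε h • ((1 : H) ⊗ₜ[k] (1 : H)) := by
  simp [unitCounit, Algebra.ofId_apply, Algebra.algebraMap_eq_smul_one,
    Algebra.TensorProduct.one_def]

theorem legOneTwo_sum {ι : Type*} (s : Finset ι) (u : ι → A) (v : ι → H)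
    {δ : A →ₐ[k] A ⊗[k] H} {a : A} (hδ : δ a = ∑ i ∈ s, u i ⊗ₜ[k] v i) (h : H) :
    legOneTwo δ (a ⊗ₜ[k] h) = ∑ i ∈ s, u i ⊗ₜ[k] (v i ⊗ₜ[k] h) := by
  simp [legOneTwo, hδ, sum_tmul]

theorem legOne_sum {ι : Type*} (s : Finset ι) (u : ι → A) (v : ι → H)
    {δ : A →ₐ[k] A ⊗[k] H} {a : A} (hδ : δ a = ∑ i ∈ s, u i ⊗ₜ[k] v i) (z : H ⊗[k] H) :
    legOne δ (a ⊗ₜ[k] z) = ∑ i ∈ s, u i ⊗ₜ[k] (v i ⊗ₜ[k] z) := by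
  simp [legOne, hδ, sum_tmul]

theorem legTwo_sum {ι : Type*} (s : Finset ι) (u v : ι → H)
    {δ : H →ₐ[k] H ⊗[k] H} {b : H} (hδ : δ b = ∑ i ∈ s, u i ⊗ₜ[k] v i) (a : A) (c : H) :
    legTwo A δ (a ⊗ₜ[k] (b ⊗ₜ[k] c)) = ∑ i ∈ s, a ⊗ₜ[k] (u i ⊗ₜ[k] (v i ⊗ₜ[k] c)) := by
  simp [legTwo, legOneTwo_sum s u v hδ, tmul_sum]

theorem legThree_sum {ι : Type*} (s : Finset ι) (u v : ι → H)
    {δ : H →ₐ[k] H ⊗[k] H} {c : H} (hδ : δ c = ∑ i ∈ s, u i ⊗ₜ[k] v i) (a : A) (b : H) :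
    legThree A δ (a ⊗ₜ[k] (b ⊗ₜ[k] c)) = ∑ i ∈ s, a ⊗ₜ[k] (b ⊗ₜ[k] (u i ⊗ₜ[k] v i)) := by
  simp [legThree, hδ, tmul_sum]

@[simp]
theorem legTwo_unitCounit (ε : H →ₐ[k] k) (a : A) (b c : H) :
    legTwo A (unitCounit ε) (a ⊗ₜ[k] (b ⊗ₜ[k] c)) =
      ε b • a ⊗ₜ[k] ((1 : H) ⊗ₜ[k] ((1 : H) ⊗ₜ[k] c)) := by
  simp [legTwo, legOneTwo, unitCounit_apply, ← smul_tmul']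

@[simp]
theorem legThree_unitCounit (ε : H →ₐ[k] k) (a : A) (b c : H) :
    legThree A (unitCounit ε) (a ⊗ₜ[k] (b ⊗ₜ[k] c)) =
      ε c • a ⊗ₜ[k] (b ⊗ₜ[k] ((1 : H) ⊗ₜ[k] (1 : H))) := by
  simp [legThree, unitCounit_apply]

@[simp]
theorem legOne_unitCounit (ε : H →ₐ[k] k) (a : H) (z : H ⊗[k] H) :
    legOne (unitCounit ε) (a ⊗ₜ[k] z) = ε a • (1 : H) ⊗ₜ[k] ((1 : H) ⊗ₜ[k] z) := by
  simp [legOne, unitCounit_apply, smul_tmul']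

@[simp]
theorem tensorOne_tmul (a : A) (b c : H) :
    tensorOne k H A (a ⊗ₜ[k] (b ⊗ₜ[k] c)) = a ⊗ₜ[k] (b ⊗ₜ[k] (c ⊗ₜ[k] (1 : H))) := by
  simp [tensorOne]

@[simp]
theorem oneTensor_apply (z : H ⊗[k] (H ⊗[k] H)) :
    oneTensor k H A z = (1 : A) ⊗ₜ[k] z := rfl

theorem linearMap_ext_three {M : Type*} [AddCommGroup M] [Module k M]
    {f g : A ⊗[k] (H ⊗[k] H) →ₗ[k] M}
    (h : ∀ a b c, f (a ⊗ₜ[k] (b ⊗ₜ[k] c)) = g (a ⊗ₜ[k] (b ⊗ₜ[k] c))) : f = g := by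
  ext a b c
  exact h a b c

theorem linearMap_ext_four {M : Type*} [AddCommGroup M] [Module k M]
    {f g : A ⊗[k] (H ⊗[k] (H ⊗[k] H)) →ₗ[k] M}
    (h : ∀ a b c d, f (a ⊗ₜ[k] (b ⊗ₜ[k] (c ⊗ₜ[k] d))) = g (a ⊗ₜ[k] (b ⊗ₜ[k] (c ⊗ₜ[k] d)))) :
    f = g := by
  ext a b c d
  exact h a b c d

/-- Two linear maps agree on all products `φ z * w` as soon as they do on pure tensors. -/
theorem map_mul_eq_of_tmul {M : Type*} [AddCommGroup M] [Module k M]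
    (L : A ⊗[k] (H ⊗[k] (H ⊗[k] H)) →ₗ[k] M)
    (φ ψ : A ⊗[k] (H ⊗[k] H) →ₐ[k] A ⊗[k] (H ⊗[k] (H ⊗[k] H)))
    (h : ∀ a b c a' b' c' d',
      L (φ (a ⊗ₜ[k] (b ⊗ₜ[k] c)) * a' ⊗ₜ[k] (b' ⊗ₜ[k] (c' ⊗ₜ[k] d'))) =
        L (ψ (a ⊗ₜ[k] (b ⊗ₜ[k] c)) * a' ⊗ₜ[k] (b' ⊗ₜ[k] (c' ⊗ₜ[k] d')))) (z w) :
    L (φ z * w) = L (ψ z * w) := by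
  have key : (LinearMap.mul k (A ⊗[k] (H ⊗[k] (H ⊗[k] H)))).compr₂ L ∘ₗ φ.toLinearMap =
      (LinearMap.mul k (A ⊗[k] (H ⊗[k] (H ⊗[k] H)))).compr₂ L ∘ₗ ψ.toLinearMap :=
    linearMap_ext_three fun a b c => linearMap_ext_four fun a' b' c' d' => h a b c a' b' c' d'
  exact LinearMap.congr_fun (LinearMap.congr_fun key z) w

/-- Two linear maps agree on all products `w * φ z` as soon as they do on pure tensors. -/
theorem mul_map_eq_of_tmul {M : Type*} [AddCommGroup M] [Module k M]
    (L : A ⊗[k] (H ⊗[k] (H ⊗[k] H)) →ₗ[k] M)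
    (φ ψ : A ⊗[k] (H ⊗[k] H) →ₐ[k] A ⊗[k] (H ⊗[k] (H ⊗[k] H)))
    (h : ∀ a b c a' b' c' d',
      L (a' ⊗ₜ[k] (b' ⊗ₜ[k] (c' ⊗ₜ[k] d')) * φ (a ⊗ₜ[k] (b ⊗ₜ[k] c))) =
        L (a' ⊗ₜ[k] (b' ⊗ₜ[k] (c' ⊗ₜ[k] d')) * ψ (a ⊗ₜ[k] (b ⊗ₜ[k] c)))) (z w) :
    L (w * φ z) = L (w * ψ z) := by
  have key : (LinearMap.mul k (A ⊗[k] (H ⊗[k] (H ⊗[k] H)))).flip.compr₂ L ∘ₗ φ.toLinearMap =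
      (LinearMap.mul k (A ⊗[k] (H ⊗[k] (H ⊗[k] H)))).flip.compr₂ L ∘ₗ ψ.toLinearMap :=
    linearMap_ext_three fun a b c => linearMap_ext_four fun a' b' c' d' => h a b c a' b' c' d'
  exact LinearMap.congr_fun (LinearMap.congr_fun key z) w

end TensorLegs

namespace RightComoduleAlgebra

variable {k : Type*} [Field k] {H : Type*} [Ring H] [Algebra k H] {QB : QuasiBialgebra k H}
  {A : Type*} [Ring A] [Algebra k A] (CA : RightComoduleAlgebra QB A)

/-- The reassociator `Φ_ρ`. -/
def reassoc : A ⊗[k] (H ⊗[k] H) := ∑ s ∈ range CA.nP, CA.P1 s ⊗ₜ[k] (CA.P2 s ⊗ₜ[k] CA.P3 s)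

/-- The inverse reassociator `Φ_ρ⁻¹`. -/
def reassocInv : A ⊗[k] (H ⊗[k] H) := ∑ s ∈ range CA.nQ, CA.Q1 s ⊗ₜ[k] (CA.Q2 s ⊗ₜ[k] CA.Q3 s)

theorem reassoc_mul_inv : CA.reassoc * CA.reassocInv = 1 := by
  simp only [reassoc, reassocInv, Finset.sum_mul]
  simp only [Finset.mul_sum, Algebra.TensorProduct.tmul_mul_tmul, Algebra.TensorProduct.one_def]
  rw [← CA.P_inv]

theorem reassoc_inv_mul : CA.reassocInv * CA.reassoc = 1 := by
  simp only [reassoc, reassocInv, Finset.sum_mul]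
  simp only [Finset.mul_sum, Algebra.TensorProduct.tmul_mul_tmul, Algebra.TensorProduct.one_def]
  rw [← CA.inv_P]

theorem reassoc_mul_legOneTwo (a : A) :
    CA.reassoc * legOneTwo CA.rho (CA.rho a) =
      Algebra.TensorProduct.map (AlgHom.id k A) QB.comul (CA.rho a) * CA.reassoc := by
  have h := CA.rca1 a
  simp only [reassoc, CA.hrho a, map_sum, legOneTwo_sum _ _ _ (CA.hrho _),
    Algebra.TensorProduct.map_tmul, QB.hcomul, tmul_sum, AlgHom.coe_id, id_eq]
  simp only [Finset.sum_mul]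
  simp only [Finset.mul_sum, Algebra.TensorProduct.tmul_mul_tmul]
  exact h

theorem reassoc_pentagon :
    oneTensor k H A (∑ s ∈ range QB.nP, QB.X1 s ⊗ₜ[k] (QB.X2 s ⊗ₜ[k] QB.X3 s)) *
        legTwo A QB.comul CA.reassoc * tensorOne k H A CA.reassoc =
      legThree A QB.comul CA.reassoc * legOne CA.rho CA.reassoc := by
  have h := CA.rca2
  simp only [reassoc, map_sum, legOne_sum _ _ _ (CA.hrho _), legTwo_sum _ _ _ (QB.hcomul _),
    legThree_sum _ _ _ (QB.hcomul _), oneTensor_apply, tensorOne_tmul, mul_assoc] at h ⊢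
  simp only [Finset.sum_mul]
  simp only [Finset.mul_sum, Algebra.TensorProduct.tmul_mul_tmul, one_mul, mul_one]
  exact h

theorem legTwo_unitCounit_reassoc : legTwo A (unitCounit QB.counit) CA.reassoc = 1 := by
  have h := congrArg (Algebra.TensorProduct.map (AlgHom.id k A)
    ((Algebra.TensorProduct.includeRight (R := k) (A := H) (B := H ⊗[k] H)).comp
      (Algebra.TensorProduct.includeRight (R := k) (A := H) (B := H)))) CA.rca4a
  simpa [reassoc, Algebra.TensorProduct.one_def] using h

theorem legThree_unitCounit_reassoc : legThree A (unitCounit QB.counit) CA.reassoc = 1 := by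
  have h := congrArg (Algebra.TensorProduct.map (AlgHom.id k A)
    (Algebra.TensorProduct.includeLeft (R := k) (S := k) (A := H) (B := H ⊗[k] H))) CA.rca4b
  simpa [reassoc, Algebra.TensorProduct.one_def] using h

theorem map_reassocInv_eq_one {B : Type*} [Ring B] [Algebra k B]
    {φ : A ⊗[k] (H ⊗[k] H) →ₐ[k] B} (h : φ CA.reassoc = 1) : φ CA.reassocInv = 1 := by
  have := congrArg φ CA.reassoc_mul_inv
  simpa [h] using this

end RightComoduleAlgebra

namespace QuasiBialgebra

variable {k : Type*} [Field k] {H : Type*} [Ring H] [Algebra k H] (QB : QuasiBialgebra k H)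

/-- The reassociator `Φ`. -/
def reassoc : H ⊗[k] (H ⊗[k] H) := ∑ s ∈ range QB.nP, QB.X1 s ⊗ₜ[k] (QB.X2 s ⊗ₜ[k] QB.X3 s)

/-- The inverse reassociator `Φ⁻¹`. -/
def reassocInv : H ⊗[k] (H ⊗[k] H) := ∑ s ∈ range QB.nQ, QB.x1 s ⊗ₜ[k] (QB.x2 s ⊗ₜ[k] QB.x3 s)

theorem reassoc_mul_inv : QB.reassoc * QB.reassocInv = 1 := by
  simp only [reassoc, reassocInv, Finset.sum_mul]
  simp only [Finset.mul_sum, Algebra.TensorProduct.tmul_mul_tmul, Algebra.TensorProduct.one_def]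
  rw [← QB.P_inv]

theorem reassoc_inv_mul : QB.reassocInv * QB.reassoc = 1 := by
  simp only [reassoc, reassocInv, Finset.sum_mul]
  simp only [Finset.mul_sum, Algebra.TensorProduct.tmul_mul_tmul, Algebra.TensorProduct.one_def]
  rw [← QB.inv_P]

theorem reassoc_mul_legOneTwo (h : H) :
    QB.reassoc * legOneTwo QB.comul (QB.comul h) =
      Algebra.TensorProduct.map (AlgHom.id k H) QB.comul (QB.comul h) * QB.reassoc := by
  have key : Algebra.TensorProduct.map (AlgHom.id k H) QB.comul (QB.comul h) =
      QB.reassoc * (legOneTwo QB.comul (QB.comul h) * QB.reassocInv) := by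
    have hc := QB.coassoc h
    simp only [reassoc, reassocInv, QB.hcomul h, map_sum, legOneTwo_sum _ _ _ (QB.hcomul _),
      Algebra.TensorProduct.map_tmul, QB.hcomul, tmul_sum, AlgHom.coe_id, id_eq]
    simp only [Finset.sum_mul]
    simp only [Finset.mul_sum, Algebra.TensorProduct.tmul_mul_tmul, ← mul_assoc]
    exact hc
  rw [key, mul_assoc, mul_assoc, reassoc_inv_mul, mul_one]

theorem legOneTwo_mul_inv (h : H) :
    legOneTwo QB.comul (QB.comul h) * QB.reassocInv =
      QB.reassocInv * Algebra.TensorProduct.map (AlgHom.id k H) QB.comul (QB.comul h) := by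
  calc legOneTwo QB.comul (QB.comul h) * QB.reassocInv
      = QB.reassocInv * (QB.reassoc * legOneTwo QB.comul (QB.comul h)) * QB.reassocInv := by
        rw [← mul_assoc, reassoc_inv_mul, one_mul]
    _ = _ := by rw [reassoc_mul_legOneTwo, mul_assoc, mul_assoc, reassoc_mul_inv, mul_one]

theorem reassoc_pentagon :
    oneTensor k H H QB.reassoc * legTwo H QB.comul QB.reassoc * tensorOne k H H QB.reassoc =
      legThree H QB.comul QB.reassoc * legOne QB.comul QB.reassoc := by
  have h := QB.pentagon
  simp only [reassoc, map_sum, legOne_sum _ _ _ (QB.hcomul _), legTwo_sum _ _ _ (QB.hcomul _),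
    legThree_sum _ _ _ (QB.hcomul _), oneTensor_apply, tensorOne_tmul, mul_assoc] at h ⊢
  simp only [Finset.sum_mul]
  simp only [Finset.mul_sum, Algebra.TensorProduct.tmul_mul_tmul, one_mul, mul_one]
  rw [h]
  refine Finset.sum_congr rfl fun _ _ => ?_
  rw [Finset.sum_comm]

theorem legTwo_unitCounit_reassoc : legTwo H (unitCounit QB.counit) QB.reassoc = 1 := by
  have h := congrArg (Algebra.TensorProduct.map (AlgHom.id k H)
    ((Algebra.TensorProduct.includeRight (R := k) (A := H) (B := H ⊗[k] H)).comp
      (Algebra.TensorProduct.includeRight (R := k) (A := H) (B := H)))) QB.normal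
  simpa [reassoc, Algebra.TensorProduct.one_def] using h

theorem map_reassocInv_eq_one {B : Type*} [Ring B] [Algebra k B]
    {φ : H ⊗[k] (H ⊗[k] H) →ₐ[k] B} (h : φ QB.reassoc = 1) : φ QB.reassocInv = 1 := by
  have := congrArg φ QB.reassoc_mul_inv
  simpa [h] using this

/-- The map `id ⊗ ε ⊗ id ⊗ id`. -/
def counitTwo : H ⊗[k] (H ⊗[k] (H ⊗[k] H)) →ₐ[k] H ⊗[k] (H ⊗[k] H) :=
  Algebra.TensorProduct.map (AlgHom.id k H)
    ((Algebra.TensorProduct.lid k (H ⊗[k] H)).toAlgHom.comp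
      (Algebra.TensorProduct.map QB.counit (AlgHom.id k (H ⊗[k] H))))

/-- The map `id ⊗ id ⊗ ε ⊗ id`. -/
def counitThree : H ⊗[k] (H ⊗[k] (H ⊗[k] H)) →ₐ[k] H ⊗[k] (H ⊗[k] H) :=
  Algebra.TensorProduct.map (AlgHom.id k H) (Algebra.TensorProduct.map (AlgHom.id k H)
    ((Algebra.TensorProduct.lid k H).toAlgHom.comp
      (Algebra.TensorProduct.map QB.counit (AlgHom.id k H))))

@[simp]
theorem counitTwo_tmul (a b : H) (z : H ⊗[k] H) :
    QB.counitTwo (a ⊗ₜ[k] (b ⊗ₜ[k] z)) = QB.counit b • a ⊗ₜ[k] z := by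
  simp [counitTwo]

@[simp]
theorem counitThree_tmul (a b c d : H) :
    QB.counitThree (a ⊗ₜ[k] (b ⊗ₜ[k] (c ⊗ₜ[k] d))) = QB.counit c • a ⊗ₜ[k] (b ⊗ₜ[k] d) := by
  simp [counitThree]

theorem sum_counit_smul_tmul_left {M : Type*} [AddCommGroup M] [Module k M] (h : H) (m : M) :
    ∑ i ∈ range QB.nD, QB.counit (QB.D1 h i) • QB.D2 h i ⊗ₜ[k] m = h ⊗ₜ[k] m := by
  simp only [smul_tmul', ← sum_tmul, QB.counit_l]

theorem sum_counit_smul_tmul_right {M : Type*} [AddCommGroup M] [Module k M] (h : H) (m : M) :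
    ∑ i ∈ range QB.nD, QB.counit (QB.D2 h i) • QB.D1 h i ⊗ₜ[k] m = h ⊗ₜ[k] m := by
  simp only [smul_tmul', ← sum_tmul, QB.counit_r]

theorem legOne_unitCounit_reassoc : legOne (unitCounit QB.counit) QB.reassoc = 1 := by
  have e1 : QB.counitTwo (legTwo H QB.comul QB.reassoc) = QB.reassoc := by
    simp only [reassoc, map_sum, legTwo_sum _ _ _ (QB.hcomul _), counitTwo_tmul]
    refine Finset.sum_congr rfl fun s _ => ?_
    rw [← sum_counit_smul_tmul_left QB (QB.X2 s) (QB.X3 s)]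
    simp only [tmul_sum, tmul_smul]
  have e2 : QB.counitTwo (tensorOne k H H QB.reassoc) = 1 := by
    have h := congrArg (Algebra.TensorProduct.map (AlgHom.id k H)
      (Algebra.TensorProduct.includeLeft (R := k) (S := k) (A := H) (B := H))) QB.normal
    simpa [reassoc, Algebra.TensorProduct.one_def] using h
  have e3 : QB.counitTwo (legThree H QB.comul QB.reassoc) = 1 := by
    have h := congrArg (Algebra.TensorProduct.map (AlgHom.id k H) QB.comul) QB.normal
    simpa [reassoc, Algebra.TensorProduct.one_def, legThree] using h
  have e4 : QB.counitTwo (legOne QB.comul QB.reassoc) = QB.reassoc := by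
    simp only [reassoc, map_sum, legOne_sum _ _ _ (QB.hcomul _), counitTwo_tmul,
      sum_counit_smul_tmul_right]
  have h := congrArg QB.counitTwo QB.reassoc_pentagon
  rw [map_mul, map_mul, map_mul, e1, e2, e3, e4, mul_one, one_mul] at h
  have h1 : QB.counitTwo (oneTensor k H H QB.reassoc) = 1 := by
    have := congrArg (· * QB.reassocInv) h
    simpa only [mul_assoc, reassoc_mul_inv, mul_one] using this
  have h2 := congrArg (oneTensor k H H) h1
  rw [map_one] at h2
  rw [← h2]
  simp [reassoc]

theorem legThree_unitCounit_reassoc : legThree H (unitCounit QB.counit) QB.reassoc = 1 := by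
  have e1 : QB.counitThree (legTwo H QB.comul QB.reassoc) = QB.reassoc := by
    simp only [reassoc, map_sum, legTwo_sum _ _ _ (QB.hcomul _), counitThree_tmul]
    refine Finset.sum_congr rfl fun s _ => ?_
    rw [← sum_counit_smul_tmul_right QB (QB.X2 s) (QB.X3 s)]
    simp only [tmul_sum, tmul_smul]
  have e2 : QB.counitThree (oneTensor k H H QB.reassoc) = 1 := by
    have h := congrArg (Algebra.TensorProduct.includeRight (R := k) (A := H) (B := H ⊗[k] H))
      QB.normal
    simpa [reassoc, Algebra.TensorProduct.one_def] using h
  have e3 : QB.counitThree (legThree H QB.comul QB.reassoc) = QB.reassoc := by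
    simp only [reassoc, map_sum, legThree_sum _ _ _ (QB.hcomul _), counitThree_tmul]
    refine Finset.sum_congr rfl fun s _ => ?_
    simp only [← tmul_smul, ← tmul_sum, QB.counit_l]
  have e4 : QB.counitThree (legOne QB.comul QB.reassoc) = 1 := by
    have h := congrArg (legOneTwo QB.comul) QB.normal
    rw [← Algebra.TensorProduct.one_def, map_one] at h
    rw [← h]
    simp [reassoc, legOne_sum _ _ _ (QB.hcomul _), legOneTwo_sum _ _ _ (QB.hcomul _),
      Finset.smul_sum]
  have h := congrArg QB.counitThree QB.reassoc_pentagon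
  rw [map_mul, map_mul, map_mul, e1, e2, e3, e4, mul_one, one_mul] at h
  have h1 : QB.counitThree (tensorOne k H H QB.reassoc) = 1 := by
    have := congrArg (QB.reassocInv * ·) h
    simpa only [← mul_assoc, reassoc_inv_mul, one_mul] using this
  have h2 := congrArg (tensorOne k H H) h1
  rw [map_one] at h2
  rw [← h2]
  simp [reassoc]

end QuasiBialgebra

namespace QuasiHopfAlgebra

variable {k : Type*} [Field k] {H : Type*} [Ring H] [Algebra k H] (QH : QuasiHopfAlgebra k H)

theorem Sinv_mul (g h : H) : QH.Sinv (g * h) = QH.Sinv h * QH.Sinv g := by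
  rw [← QH.Sinv_S (QH.Sinv h * QH.Sinv g), QH.S_mul, QH.S_Sinv, QH.S_Sinv]

theorem Sinv_one : QH.Sinv 1 = 1 := by
  rw [← QH.S_one, QH.Sinv_S, QH.S_one]

theorem sum_antipode_left_mul (h v : H) :
    ∑ i ∈ range QH.nD, QH.S (QH.D1 h i) * (QH.aE * (QH.D2 h i * v)) =
      QH.counit h • (QH.aE * v) := by
  rw [← smul_mul_assoc, ← QH.antip_l h]
  simp only [Finset.sum_mul, mul_assoc]

theorem sum_antipode_right_mul (h v : H) :
    ∑ i ∈ range QH.nD, QH.D1 h i * (QH.bE * (QH.S (QH.D2 h i) * v)) =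
      QH.counit h • (QH.bE * v) := by
  rw [← smul_mul_assoc, ← QH.antip_r h]
  simp only [Finset.sum_mul, mul_assoc]

/-- The anti-multiplicative map `u ⊗ v ↦ S(v) ⊗ S(u)`. -/
def swapS : H ⊗[k] H →ₗ[k] H ⊗[k] H :=
  TensorProduct.map QH.S QH.S ∘ₗ (TensorProduct.comm k H H).toLinearMap

/-- The anti-multiplicative map `u ⊗ v ↦ S⁻¹(v) ⊗ S⁻¹(u)`. -/
def swapSinv : H ⊗[k] H →ₗ[k] H ⊗[k] H :=
  TensorProduct.map QH.Sinv QH.Sinv ∘ₗ (TensorProduct.comm k H H).toLinearMap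

@[simp]
theorem swapS_tmul (u v : H) : QH.swapS (u ⊗ₜ[k] v) = QH.S v ⊗ₜ[k] QH.S u := by
  simp [swapS]

@[simp]
theorem swapSinv_tmul (u v : H) : QH.swapSinv (u ⊗ₜ[k] v) = QH.Sinv v ⊗ₜ[k] QH.Sinv u := by
  simp [swapSinv]

theorem swapS_mul (x y : H ⊗[k] H) : QH.swapS (x * y) = QH.swapS y * QH.swapS x := by
  induction x using TensorProduct.induction_on with
  | zero => simp
  | add x x' hx hx' => simp [add_mul, mul_add, hx, hx']
  | tmul u v =>
    induction y using TensorProduct.induction_on with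
    | zero => simp
    | add y y' hy hy' => simp [add_mul, mul_add, hy, hy']
    | tmul u' v' => simp [QH.S_mul]

theorem swapSinv_mul (x y : H ⊗[k] H) :
    QH.swapSinv (x * y) = QH.swapSinv y * QH.swapSinv x := by
  induction x using TensorProduct.induction_on with
  | zero => simp
  | add x x' hx hx' => simp [add_mul, mul_add, hx, hx']
  | tmul u v =>
    induction y using TensorProduct.induction_on with
    | zero => simp
    | add y y' hy hy' => simp [add_mul, mul_add, hy, hy']
    | tmul u' v' => simp [QH.Sinv_mul]

theorem swapSinv_swapS (x : H ⊗[k] H) : QH.swapSinv (QH.swapS x) = x := by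
  induction x using TensorProduct.induction_on with
  | zero => simp
  | add x x' hx hx' => simp [hx, hx']
  | tmul u v => simp [QH.Sinv_S]

/-- The map `b ⊗ c ↦ b β S(c)`. -/
def mulBeta : H ⊗[k] H →ₗ[k] H :=
  LinearMap.mul' k H ∘ₗ TensorProduct.map (LinearMap.mulRight k QH.bE) QH.S

/-- The map `b ⊗ c ↦ S(b) α c`. -/
def mulAlpha : H ⊗[k] H →ₗ[k] H :=
  LinearMap.mul' k H ∘ₗ TensorProduct.map (LinearMap.mulRight k QH.aE ∘ₗ QH.S) LinearMap.id

/-- The map `b ⊗ c ⊗ d ↦ b β S(c) α d`. -/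
def mulBetaAlpha : H ⊗[k] (H ⊗[k] H) →ₗ[k] H :=
  LinearMap.mul' k H ∘ₗ TensorProduct.map (LinearMap.mulRight k QH.bE) QH.mulAlpha

/-- The map `b ⊗ c ⊗ d ↦ S(b) α c β S(d)`. -/
def mulAlphaBeta : H ⊗[k] (H ⊗[k] H) →ₗ[k] H :=
  LinearMap.mul' k H ∘ₗ TensorProduct.map (LinearMap.mulRight k QH.aE ∘ₗ QH.S) QH.mulBeta

@[simp]
theorem mulBeta_tmul (b c : H) : QH.mulBeta (b ⊗ₜ[k] c) = b * QH.bE * QH.S c := by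
  simp [mulBeta]

@[simp]
theorem mulAlpha_tmul (b c : H) : QH.mulAlpha (b ⊗ₜ[k] c) = QH.S b * QH.aE * c := by
  simp [mulAlpha]

@[simp]
theorem mulBetaAlpha_tmul (b c d : H) :
    QH.mulBetaAlpha (b ⊗ₜ[k] (c ⊗ₜ[k] d)) = b * QH.bE * QH.S c * QH.aE * d := by
  simp [mulBetaAlpha, mul_assoc]

@[simp]
theorem mulAlphaBeta_tmul (b c d : H) :
    QH.mulAlphaBeta (b ⊗ₜ[k] (c ⊗ₜ[k] d)) = QH.S b * QH.aE * c * QH.bE * QH.S d := by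
  simp [mulAlphaBeta, mul_assoc]

theorem mulBetaAlpha_reassoc : QH.mulBetaAlpha QH.reassoc = 1 := by
  simp [QuasiBialgebra.reassoc, QH.antip_X]

theorem mulAlphaBeta_reassocInv : QH.mulAlphaBeta QH.reassocInv = 1 := by
  simp [QuasiBialgebra.reassocInv, QH.antip_x]

/-- The map `a ⊗ b ⊗ c ⊗ d ↦ S(b) α c ⊗ S(a) α d`. -/
def gammaMap : H ⊗[k] (H ⊗[k] (H ⊗[k] H)) →ₗ[k] H ⊗[k] H :=
  LinearMap.mul' k (H ⊗[k] H) ∘ₗ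
    TensorProduct.map (LinearMap.mulRight k (QH.aE ⊗ₜ[k] QH.aE) ∘ₗ QH.swapS) LinearMap.id ∘ₗ
    (TensorProduct.assoc k H H (H ⊗[k] H)).symm.toLinearMap

@[simp]
theorem gammaMap_tmul (a b c d : H) :
    QH.gammaMap (a ⊗ₜ[k] (b ⊗ₜ[k] (c ⊗ₜ[k] d))) =
      (QH.S b * QH.aE * c) ⊗ₜ[k] (QH.S a * QH.aE * d) := by
  simp [gammaMap]

/-- The element `γ`. -/
def gamma : H ⊗[k] H :=
  QH.gammaMap (tensorOne k H H QH.reassoc * legOne QH.comul QH.reassocInv)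

theorem gammaMap_legTwo_comul_mul (z w) :
    QH.gammaMap (legTwo H QH.comul z * w) =
      QH.gammaMap (legTwo H (unitCounit QH.counit) z * w) := by
  refine map_mul_eq_of_tmul _ _ _ (fun a b c a' b' c' d' => ?_) z w
  simp only [legTwo_sum _ _ _ (QH.hcomul _), Finset.sum_mul, map_sum, legTwo_unitCounit,
    Algebra.TensorProduct.tmul_mul_tmul, gammaMap_tmul, QH.S_mul, mul_assoc, smul_mul_assoc,
    map_smul, ← sum_tmul, ← Finset.mul_sum, QH.sum_antipode_left_mul, one_mul, mul_smul_comm,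
    ← smul_tmul']

theorem gammaMap_mul_legOne (w : H ⊗[k] (H ⊗[k] (H ⊗[k] H))) (h : H) (z : H ⊗[k] H) :
    QH.gammaMap (w * legOne QH.comul (h ⊗ₜ[k] z)) =
      QH.swapS (QH.comul h) * QH.gammaMap w * z := by
  have key : ∀ x : H ⊗[k] H, QH.gammaMap (w *
      Algebra.TensorProduct.assoc k k k H H (H ⊗[k] H) (x ⊗ₜ[k] z)) =
        QH.swapS x * QH.gammaMap w * z := by
    intro x
    induction x using TensorProduct.induction_on with
    | zero => simp
    | add x x' hx hx' => simp [add_tmul, add_mul, mul_add, hx, hx']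
    | tmul u v =>
      induction z using TensorProduct.induction_on with
      | zero => simp
      | add x x' hx hx' => simp only [tmul_add, map_add, mul_add, hx, hx']
      | tmul u' v' =>
        have : QH.gammaMap ∘ₗ LinearMap.mulRight k (u ⊗ₜ[k] (v ⊗ₜ[k] (u' ⊗ₜ[k] v'))) =
            LinearMap.mulRight k (u' ⊗ₜ[k] v') ∘ₗ
              LinearMap.mulLeft k (QH.swapS (u ⊗ₜ[k] v)) ∘ₗ QH.gammaMap :=
          linearMap_ext_four fun a b c d => by simp [QH.S_mul, mul_assoc]
        exact LinearMap.congr_fun this w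
  exact key _

theorem tensorOne_reassoc_mul_legOne (t : H ⊗[k] H) :
    tensorOne k H H QH.reassoc * legOne QH.comul (legOneTwo QH.comul t) =
      legTwo H QH.comul (legOneTwo QH.comul t) * tensorOne k H H QH.reassoc := by
  induction t using TensorProduct.induction_on with
  | zero => simp
  | add x x' hx hx' => simp only [map_add, mul_add, add_mul, hx, hx']
  | tmul u v =>
    have e1 : legOne QH.comul (legOneTwo QH.comul (u ⊗ₜ[k] v)) =
        tensorOne k H H (legOneTwo QH.comul (QH.comul u)) *
          (1 : H) ⊗ₜ[k] ((1 : H) ⊗ₜ[k] ((1 : H) ⊗ₜ[k] v)) := by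
      rw [legOneTwo_sum _ _ _ (QH.hcomul _), QH.hcomul u]
      simp [legOne_sum _ _ _ (QH.hcomul _), legOneTwo_sum _ _ _ (QH.hcomul _), Finset.sum_mul]
    have e2 : legTwo H QH.comul (legOneTwo QH.comul (u ⊗ₜ[k] v)) =
        tensorOne k H H
            (Algebra.TensorProduct.map (AlgHom.id k H) QH.comul (QH.comul u)) *
          (1 : H) ⊗ₜ[k] ((1 : H) ⊗ₜ[k] ((1 : H) ⊗ₜ[k] v)) := by
      rw [legOneTwo_sum _ _ _ (QH.hcomul _), QH.hcomul u]
      simp [legTwo_sum _ _ _ (QH.hcomul _), QH.hcomul, tmul_sum, Finset.sum_mul]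
    have e3 : ∀ z : H ⊗[k] (H ⊗[k] H),
        (1 : H) ⊗ₜ[k] ((1 : H) ⊗ₜ[k] ((1 : H) ⊗ₜ[k] v)) * tensorOne k H H z =
          tensorOne k H H z * (1 : H) ⊗ₜ[k] ((1 : H) ⊗ₜ[k] ((1 : H) ⊗ₜ[k] v)) := by
      intro z
      have : LinearMap.mulLeft k ((1 : H) ⊗ₜ[k] ((1 : H) ⊗ₜ[k] ((1 : H) ⊗ₜ[k] v))) ∘ₗ
          (tensorOne k H H).toLinearMap =
          LinearMap.mulRight k ((1 : H) ⊗ₜ[k] ((1 : H) ⊗ₜ[k] ((1 : H) ⊗ₜ[k] v))) ∘ₗ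
          (tensorOne k H H).toLinearMap := linearMap_ext_three fun a b c => by simp
      exact LinearMap.congr_fun this z
    rw [e1, e2, mul_assoc, e3, ← mul_assoc, ← mul_assoc, ← map_mul, ← map_mul,
      QuasiBialgebra.reassoc_mul_legOneTwo]

theorem sum_swapS_comul_mul_gamma_mul (h : H) :
    ∑ i ∈ range QH.nD, QH.swapS (QH.comul (QH.D1 h i)) * QH.gamma * QH.comul (QH.D2 h i) =
      QH.counit h • QH.gamma := by
  have e1 : ∀ w : H ⊗[k] (H ⊗[k] (H ⊗[k] H)), QH.gammaMap
      (legTwo H (unitCounit QH.counit) (legOneTwo QH.comul (QH.comul h)) * w) =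
        QH.counit h • QH.gammaMap w := by
    intro w
    have : QH.gammaMap ∘ₗ LinearMap.mulLeft k
        (legTwo H (unitCounit QH.counit) (legOneTwo QH.comul (QH.comul h))) =
        QH.counit h • QH.gammaMap := by
      have e : legTwo H (unitCounit QH.counit) (legOneTwo QH.comul (QH.comul h)) =
          ∑ i ∈ range QH.nD,
            QH.D1 h i ⊗ₜ[k] ((1 : H) ⊗ₜ[k] ((1 : H) ⊗ₜ[k] QH.D2 h i)) := by
        rw [QH.hcomul h]
        simp only [map_sum, legOneTwo_sum _ _ _ (QH.hcomul _), legTwo_unitCounit]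
        refine Finset.sum_congr rfl fun i _ => ?_
        rw [QH.sum_counit_smul_tmul_right]
      refine linearMap_ext_four fun a b c d => ?_
      rw [e]
      simp only [LinearMap.comp_apply, LinearMap.mulLeft_apply, Finset.sum_mul, map_sum,
        Algebra.TensorProduct.tmul_mul_tmul, gammaMap_tmul, QH.S_mul, mul_assoc, one_mul,
        ← tmul_sum, ← Finset.mul_sum, QH.sum_antipode_left_mul, mul_smul_comm, tmul_smul,
        LinearMap.smul_apply]
    exact LinearMap.congr_fun this w
  have e2 : ∑ i ∈ range QH.nD,
      QH.swapS (QH.comul (QH.D1 h i)) * QH.gamma * QH.comul (QH.D2 h i) =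
      QH.gammaMap (tensorOne k H H QH.reassoc * legOne QH.comul QH.reassocInv *
        legOne QH.comul
          (Algebra.TensorProduct.map (AlgHom.id k H) QH.comul (QH.comul h))) := by
    rw [QH.hcomul h]
    simp only [map_sum, Algebra.TensorProduct.map_tmul, Finset.mul_sum, gammaMap_mul_legOne]
    rfl
  rw [e2, mul_assoc, ← map_mul, ← QuasiBialgebra.legOneTwo_mul_inv, map_mul (legOne _), ← mul_assoc,
    tensorOne_reassoc_mul_legOne, mul_assoc, gammaMap_legTwo_comul_mul, e1]
  rfl

end QuasiHopfAlgebra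

namespace QuasiHopfAlgebra

variable {k : Type*} [Field k] {H : Type*} [Ring H] [Algebra k H] (QH : QuasiHopfAlgebra k H)

theorem mulBeta_mul_comul (w : H ⊗[k] H) (h : H) :
    QH.mulBeta (w * QH.comul h) = QH.counit h • QH.mulBeta w := by
  induction w using TensorProduct.induction_on with
  | zero => simp
  | add x x' hx hx' => simp only [add_mul, map_add, hx, hx', smul_add]
  | tmul b c =>
    simp only [QH.hcomul, Finset.mul_sum, Algebra.TensorProduct.tmul_mul_tmul, map_sum,
      mulBeta_tmul, QH.S_mul, mul_assoc]
    rw [← Finset.mul_sum, QH.sum_antipode_right_mul, mul_smul_comm]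

/-- The map `a ⊗ w ↦ (S ⊗ S)(Δᵒᵖ(a)) γ Δ(φ(w))`. -/
def gammaConj {M : Type*} [AddCommGroup M] [Module k M] (φ : M →ₗ[k] H) :
    H ⊗[k] M →ₗ[k] H ⊗[k] H :=
  LinearMap.mul' k (H ⊗[k] H) ∘ₗ
    TensorProduct.map (LinearMap.mulRight k QH.gamma ∘ₗ QH.swapS ∘ₗ QH.comul.toLinearMap)
      (QH.comul.toLinearMap ∘ₗ φ)

@[simp]
theorem gammaConj_tmul {M : Type*} [AddCommGroup M] [Module k M] (φ : M →ₗ[k] H) (a : H) (w : M) :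
    QH.gammaConj φ (a ⊗ₜ[k] w) = QH.swapS (QH.comul a) * QH.gamma * QH.comul (φ w) := by
  simp [gammaConj]

theorem sum_swapS_comul_mul (h a : H) (z : H ⊗[k] H) :
    ∑ i ∈ range QH.nD,
      QH.swapS (QH.comul (QH.D1 h i * a)) * QH.gamma * (QH.comul (QH.D2 h i) * z) =
      QH.counit h • (QH.swapS (QH.comul a) * QH.gamma * z) := by
  rw [mul_assoc, ← mul_smul_comm, ← smul_mul_assoc, ← QH.sum_swapS_comul_mul_gamma_mul]
  simp only [map_mul, QH.swapS_mul, Finset.mul_sum, Finset.sum_mul, mul_assoc]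

/-- The Drinfeld twist `f` computed from its defining formula. -/
def twist : H ⊗[k] H := QH.gammaConj QH.mulBeta QH.reassocInv

theorem twist_mul_comul_S (h : H) :
    QH.twist * QH.comul (QH.S h) = QH.swapS (QH.comul h) * QH.twist := by
  have e1 : ∀ w, QH.gammaConj QH.mulBeta (legOneTwo QH.comul (QH.comul h) * w) =
      QH.gammaConj QH.mulBeta w * QH.comul (QH.S h) := by
    intro w
    have : QH.gammaConj QH.mulBeta ∘ₗ LinearMap.mulLeft k (legOneTwo QH.comul (QH.comul h)) =
        LinearMap.mulRight k (QH.comul (QH.S h)) ∘ₗ QH.gammaConj QH.mulBeta := by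
      refine linearMap_ext_three fun a b c => ?_
      have e : ∀ i, QH.gammaConj QH.mulBeta (legOneTwo QH.comul (QH.D1 h i ⊗ₜ[k] QH.D2 h i) *
          a ⊗ₜ[k] (b ⊗ₜ[k] c)) = QH.counit (QH.D1 h i) •
            (QH.swapS (QH.comul a) * QH.gamma *
              QH.comul (b * QH.bE * QH.S c * QH.S (QH.D2 h i))) := by
        intro i
        rw [legOneTwo_sum _ _ _ (QH.hcomul _), ← sum_swapS_comul_mul]
        simp only [Finset.sum_mul, Algebra.TensorProduct.tmul_mul_tmul, map_sum,
          gammaConj_tmul, mulBeta_tmul, QH.S_mul, map_mul, mul_assoc]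
      have e' : QH.S h = ∑ i ∈ range QH.nD, QH.counit (QH.D1 h i) • QH.S (QH.D2 h i) := by
        conv_lhs => rw [← QH.counit_l h]
        simp only [map_sum, map_smul]
      simp only [LinearMap.comp_apply, LinearMap.mulLeft_apply, LinearMap.mulRight_apply,
        gammaConj_tmul, mulBeta_tmul]
      rw [QH.hcomul h, map_sum, Finset.sum_mul, map_sum, Finset.sum_congr rfl fun i _ => e i, e']
      simp only [map_sum, map_smul, Finset.mul_sum, mul_smul_comm, map_mul, mul_assoc]
    exact LinearMap.congr_fun this w
  have e2 : ∀ w, QH.gammaConj QH.mulBeta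
      (w * Algebra.TensorProduct.map (AlgHom.id k H) QH.comul (QH.comul h)) =
      QH.swapS (QH.comul h) * QH.gammaConj QH.mulBeta w := by
    intro w
    induction w using TensorProduct.induction_on with
    | zero => simp
    | add x x' hx hx' => simp only [add_mul, mul_add, map_add, hx, hx']
    | tmul a w =>
      have e' : QH.swapS (QH.comul h) =
          ∑ i ∈ range QH.nD, QH.counit (QH.D2 h i) • QH.swapS (QH.comul (QH.D1 h i)) := by
        conv_lhs => rw [← QH.counit_r h]
        simp only [map_sum, map_smul]
      rw [e', QH.hcomul h]
      simp only [map_sum, Algebra.TensorProduct.map_tmul, AlgHom.coe_id, id_eq, Finset.mul_sum,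
        Algebra.TensorProduct.tmul_mul_tmul, gammaConj_tmul, mulBeta_mul_comul, map_smul,
        Finset.sum_mul, map_mul, swapS_mul, mul_smul_comm, smul_mul_assoc, mul_assoc]
  rw [twist, ← e1, ← e2, QuasiBialgebra.legOneTwo_mul_inv]

theorem twist_mul_comul_aE : QH.twist * QH.comul QH.aE = QH.gamma := by
  set L := QH.gammaConj QH.mulBetaAlpha with hL
  have drop_one : ∀ z w, L (legOne QH.comul z * w) =
      L (legOne (unitCounit QH.counit) z * w) := by
    refine map_mul_eq_of_tmul _ _ _ (fun a b c a' b' c' d' => ?_)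
    rw [legOne_sum _ _ _ (QH.hcomul _)]
    simp only [Finset.sum_mul, map_sum, legOne_unitCounit, Algebra.TensorProduct.tmul_mul_tmul,
      smul_mul_assoc, map_smul, one_mul, hL, gammaConj_tmul, mulBetaAlpha_tmul]
    rw [← sum_swapS_comul_mul]
    simp only [map_mul, mul_assoc]
  have drop_two : ∀ z w, L (w * legTwo H QH.comul z) =
      L (w * legTwo H (unitCounit QH.counit) z) := by
    refine mul_map_eq_of_tmul _ _ _ (fun a b c a' b' c' d' => ?_)
    rw [legTwo_sum _ _ _ (QH.hcomul _)]
    simp only [Finset.mul_sum, map_sum, legTwo_unitCounit, Algebra.TensorProduct.tmul_mul_tmul,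
      mul_smul_comm, map_smul, mul_one, hL, gammaConj_tmul, mulBetaAlpha_tmul]
    simp only [← map_sum, ← Finset.mul_sum, QH.S_mul, mul_assoc, QH.sum_antipode_right_mul,
      map_smul, mul_smul_comm]
  have drop_three : ∀ z w, L (legThree H QH.comul z * w) =
      L (legThree H (unitCounit QH.counit) z * w) := by
    refine map_mul_eq_of_tmul _ _ _ (fun a b c a' b' c' d' => ?_)
    rw [legThree_sum _ _ _ (QH.hcomul _)]
    simp only [Finset.sum_mul, map_sum, legThree_unitCounit, Algebra.TensorProduct.tmul_mul_tmul,
      smul_mul_assoc, map_smul, one_mul, hL, gammaConj_tmul, mulBetaAlpha_tmul]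
    simp only [← map_sum, ← Finset.mul_sum, QH.S_mul, mul_assoc, QH.sum_antipode_left_mul,
      map_smul, mul_smul_comm]
  have hT : tensorOne k H H QH.reassocInv = legOne QH.comul QH.reassocInv *
      (legThree H QH.comul QH.reassocInv *
        (oneTensor k H H QH.reassoc * legTwo H QH.comul QH.reassoc)) := by
    have h := congrArg (fun t => legOne QH.comul QH.reassocInv *
      (legThree H QH.comul QH.reassocInv * (t * tensorOne k H H QH.reassocInv)))
      QH.reassoc_pentagon
    simp only [mul_assoc] at h
    rw [← map_mul (tensorOne k H H), QuasiBialgebra.reassoc_mul_inv, map_one, mul_one] at h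
    rw [h]
    simp only [← mul_assoc]
    rw [mul_assoc (legOne QH.comul QH.reassocInv), ← map_mul, QuasiBialgebra.reassoc_inv_mul,
      map_one, mul_one, ← map_mul, QuasiBialgebra.reassoc_inv_mul, map_one, one_mul]
  have h1 : L (tensorOne k H H QH.reassocInv) = QH.twist * QH.comul QH.aE := by
    simp only [twist, QuasiBialgebra.reassocInv, map_sum, Finset.sum_mul, tensorOne_tmul, hL,
      gammaConj_tmul, mulBetaAlpha_tmul, mulBeta_tmul, mul_one, map_mul, mul_assoc]
  rw [← h1, hT, drop_one, QH.map_reassocInv_eq_one QH.legOne_unitCounit_reassoc, one_mul,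
    drop_three, QH.map_reassocInv_eq_one QH.legThree_unitCounit_reassoc, one_mul,
    drop_two, QH.legTwo_unitCounit_reassoc, mul_one, oneTensor_apply, hL, gammaConj_tmul,
    mulBetaAlpha_reassoc]
  simp only [map_one, Algebra.TensorProduct.one_def, swapS_tmul, QH.S_one]
  rw [← Algebra.TensorProduct.one_def, one_mul, mul_one]

end QuasiHopfAlgebra

namespace QuasiHopfAlgebra

variable {k : Type*} [Field k] {H : Type*} [Ring H] [Algebra k H] (QH : QuasiHopfAlgebra k H)

/-- The map `a ⊗ b ⊗ c ↦ S(a) α b ⊗ c`. -/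
def mulAlphaLeft : H ⊗[k] (H ⊗[k] H) →ₗ[k] H ⊗[k] H :=
  TensorProduct.map QH.mulAlpha LinearMap.id ∘ₗ (TensorProduct.assoc k H H H).symm.toLinearMap

@[simp]
theorem mulAlphaLeft_tmul (a b c : H) :
    QH.mulAlphaLeft (a ⊗ₜ[k] (b ⊗ₜ[k] c)) = (QH.S a * QH.aE * b) ⊗ₜ[k] c := by
  simp [mulAlphaLeft]

/-- The element `q_L = ∑ S(x¹) α x² ⊗ x³`. -/
def qLeft : H ⊗[k] H := QH.mulAlphaLeft QH.reassocInv

theorem mulAlphaLeft_mul (w : H ⊗[k] (H ⊗[k] H)) (h : H) (z : H ⊗[k] H) :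
    QH.mulAlphaLeft (w * h ⊗ₜ[k] z) = QH.S h ⊗ₜ[k] (1 : H) * QH.mulAlphaLeft w * z := by
  induction z using TensorProduct.induction_on with
  | zero => simp
  | add x x' hx hx' => simp only [tmul_add, mul_add, map_add, hx, hx']
  | tmul u v =>
    have : QH.mulAlphaLeft ∘ₗ LinearMap.mulRight k (h ⊗ₜ[k] (u ⊗ₜ[k] v)) =
        LinearMap.mulRight k (u ⊗ₜ[k] v) ∘ₗ
          LinearMap.mulLeft k (QH.S h ⊗ₜ[k] (1 : H)) ∘ₗ QH.mulAlphaLeft :=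
      linearMap_ext_three fun a b c => by simp [QH.S_mul, mul_assoc]
    exact LinearMap.congr_fun this w

theorem mulAlphaLeft_legOneTwo_mul (h : H) (w : H ⊗[k] (H ⊗[k] H)) :
    QH.mulAlphaLeft (legOneTwo QH.comul (QH.comul h) * w) =
      (1 : H) ⊗ₜ[k] h * QH.mulAlphaLeft w := by
  have : QH.mulAlphaLeft ∘ₗ LinearMap.mulLeft k (legOneTwo QH.comul (QH.comul h)) =
      LinearMap.mulLeft k ((1 : H) ⊗ₜ[k] h) ∘ₗ QH.mulAlphaLeft := by
    refine linearMap_ext_three fun a b c => ?_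
    have e : ∀ i, QH.mulAlphaLeft (legOneTwo QH.comul (QH.D1 h i ⊗ₜ[k] QH.D2 h i) *
        a ⊗ₜ[k] (b ⊗ₜ[k] c)) =
          (QH.S a * QH.aE * b) ⊗ₜ[k] ((QH.counit (QH.D1 h i) • QH.D2 h i) * c) := by
      intro i
      rw [legOneTwo_sum _ _ _ (QH.hcomul _)]
      simp only [Finset.sum_mul, Algebra.TensorProduct.tmul_mul_tmul, map_sum,
        mulAlphaLeft_tmul, QH.S_mul, mul_assoc, ← sum_tmul, ← Finset.mul_sum,
        QH.sum_antipode_left_mul, mul_smul_comm, smul_mul_assoc, smul_tmul]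
    simp only [LinearMap.comp_apply, LinearMap.mulLeft_apply]
    conv_lhs => rw [QH.hcomul h, map_sum, Finset.sum_mul, map_sum]
    rw [Finset.sum_congr rfl fun i _ => e i, ← tmul_sum, ← Finset.sum_mul, QH.counit_l]
    simp
  exact LinearMap.congr_fun this w

theorem sum_S_mul_qLeft_mul_comul (h : H) :
    ∑ i ∈ range QH.nD, QH.S (QH.D1 h i) ⊗ₜ[k] (1 : H) * QH.qLeft * QH.comul (QH.D2 h i) =
      (1 : H) ⊗ₜ[k] h * QH.qLeft := by
  rw [qLeft, ← mulAlphaLeft_legOneTwo_mul, QuasiBialgebra.legOneTwo_mul_inv]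
  conv_rhs => rw [QH.hcomul h, map_sum, Finset.mul_sum, map_sum]
  simp only [Algebra.TensorProduct.map_tmul, AlgHom.coe_id, id_eq, mulAlphaLeft_mul]

theorem gammaMap_oneTensor_mul (w : H ⊗[k] (H ⊗[k] H)) (a b : H) (z : H ⊗[k] H) :
    QH.gammaMap (oneTensor k H H w * a ⊗ₜ[k] (b ⊗ₜ[k] z)) =
      QH.S b ⊗ₜ[k] (QH.S a * QH.aE) * QH.mulAlphaLeft w * z := by
  induction z using TensorProduct.induction_on with
  | zero => simp
  | add x x' hx hx' => simp only [tmul_add, mul_add, map_add, hx, hx']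
  | tmul u v =>
    have : QH.gammaMap ∘ₗ LinearMap.mulRight k (a ⊗ₜ[k] (b ⊗ₜ[k] (u ⊗ₜ[k] v))) ∘ₗ
          (oneTensor k H H).toLinearMap =
        LinearMap.mulRight k (u ⊗ₜ[k] v) ∘ₗ
          LinearMap.mulLeft k (QH.S b ⊗ₜ[k] (QH.S a * QH.aE)) ∘ₗ QH.mulAlphaLeft :=
      linearMap_ext_three fun a b c => by simp [QH.S_mul, mul_assoc]
    exact LinearMap.congr_fun this w

theorem gamma_eq_sum_qLeft : QH.gamma = ∑ s ∈ range QH.nP,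
    QH.S (QH.X2 s) ⊗ₜ[k] (QH.S (QH.X1 s) * QH.aE) * QH.qLeft * QH.comul (QH.X3 s) := by
  have hT : legTwo H QH.comul QH.reassoc *
      (tensorOne k H H QH.reassoc * legOne QH.comul QH.reassocInv) =
        oneTensor k H H QH.reassocInv * legThree H QH.comul QH.reassoc := by
    have h := congrArg (fun t => oneTensor k H H QH.reassocInv * (t *
      legOne QH.comul QH.reassocInv)) QH.reassoc_pentagon
    simp only [mul_assoc] at h
    rw [← map_mul (legOne _), QuasiBialgebra.reassoc_mul_inv, map_one, mul_one, ← mul_assoc,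
      ← map_mul (oneTensor k H H), QuasiBialgebra.reassoc_inv_mul, map_one, one_mul] at h
    exact h
  have h := congrArg QH.gammaMap hT
  rw [gammaMap_legTwo_comul_mul, QH.legTwo_unitCounit_reassoc, one_mul] at h
  rw [gamma, h]
  conv_lhs => rw [QuasiBialgebra.reassoc, map_sum, Finset.mul_sum, map_sum]
  refine Finset.sum_congr rfl fun s _ => ?_
  exact QH.gammaMap_oneTensor_mul _ _ _ _

end QuasiHopfAlgebra

namespace DrinfeldTwist

variable {k : Type*} [Field k] {H : Type*} [Ring H] [Algebra k H] {QH : QuasiHopfAlgebra k H}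
  (DT : DrinfeldTwist QH)

/-- The inverse `f⁻¹` of the Drinfeld twist. -/
def inverse : H ⊗[k] H := ∑ t ∈ range DT.nf, DT.g1 t ⊗ₜ[k] DT.g2 t

theorem gamma_eq_sum : QH.gamma = ∑ p ∈ range QH.nP, ∑ j ∈ range QH.nQ, ∑ l ∈ range QH.nD,
    (QH.S (QH.X2 p * QH.D2 (QH.x1 j) l) * QH.aE * (QH.X3 p * QH.x2 j)) ⊗ₜ[k]
      (QH.S (QH.X1 p * QH.D1 (QH.x1 j) l) * QH.aE * QH.x3 j) := by
  simp only [QuasiHopfAlgebra.gamma, QuasiBialgebra.reassoc, QuasiBialgebra.reassocInv, map_sum,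
    tensorOne_tmul, legOne_sum _ _ _ (QH.hcomul _)]
  simp only [Finset.sum_mul]
  simp only [Finset.mul_sum, map_sum, Algebra.TensorProduct.tmul_mul_tmul,
    QuasiHopfAlgebra.gammaMap_tmul, one_mul]

theorem twist_eq_sum : QH.twist = ∑ t ∈ range DT.nf, DT.f1 t ⊗ₜ[k] DT.f2 t := by
  rw [DT.h_f]
  simp only [QuasiHopfAlgebra.twist, QuasiBialgebra.reassocInv, map_sum,
    QuasiHopfAlgebra.gammaConj_tmul, QuasiHopfAlgebra.mulBeta_tmul]
  refine Finset.sum_congr rfl fun j _ => ?_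
  rw [gamma_eq_sum, QH.hcomul (QH.x1 j), QH.hcomul (QH.x2 j * QH.bE * QH.S (QH.x3 j))]
  simp only [map_sum, Finset.sum_mul, QuasiHopfAlgebra.swapS_tmul]
  simp only [Finset.mul_sum, Finset.sum_mul, Algebra.TensorProduct.tmul_mul_tmul]
  refine Finset.sum_congr rfl fun l _ => ?_
  rw [Finset.sum_comm]
  refine Finset.sum_congr rfl fun p _ => ?_
  rw [Finset.sum_comm]
  refine Finset.sum_congr rfl fun j' _ => ?_
  rw [Finset.sum_comm]

theorem twist_mul_inverse : QH.twist * DT.inverse = 1 := by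
  rw [DT.twist_eq_sum, inverse, Algebra.TensorProduct.one_def, ← DT.f_inv, Finset.sum_mul]
  simp only [Finset.mul_sum, Algebra.TensorProduct.tmul_mul_tmul]

theorem swapSinv_gamma_mul (d : H) :
    QH.swapSinv (QH.gamma * QH.comul d * DT.inverse) = QH.comul (QH.Sinv (QH.aE * d)) := by
  have h : QH.gamma * QH.comul d * DT.inverse =
      QH.swapS (QH.comul (QH.Sinv (QH.aE * d))) := by
    rw [← QH.twist_mul_comul_aE, mul_assoc QH.twist, ← map_mul]
    conv_lhs => rw [← QH.S_Sinv (QH.aE * d), QH.twist_mul_comul_S, mul_assoc,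
      DT.twist_mul_inverse, mul_one]
  rw [h, QH.swapSinv_swapS]

end DrinfeldTwist

namespace RightComoduleAlgebra

variable {k : Type*} [Field k] {H : Type*} [Ring H] [Algebra k H] {QH : QuasiHopfAlgebra k H}
  {A : Type*} [Ring A] [Algebra k A] (CA : RightComoduleAlgebra QH.toQuasiBialgebra A)

theorem legOneTwo_mul_reassocInv (a : A) :
    legOneTwo CA.rho (CA.rho a) * CA.reassocInv =
      CA.reassocInv * Algebra.TensorProduct.map (AlgHom.id k A) QH.comul (CA.rho a) := by
  calc legOneTwo CA.rho (CA.rho a) * CA.reassocInv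
      = CA.reassocInv * (CA.reassoc * legOneTwo CA.rho (CA.rho a)) * CA.reassocInv := by
        rw [← mul_assoc, reassoc_inv_mul, one_mul]
    _ = _ := by rw [reassoc_mul_legOneTwo, mul_assoc, mul_assoc, reassoc_mul_inv, mul_one]

end RightComoduleAlgebra

namespace QuasiHopfAlgebra

variable {k : Type*} [Field k] {H : Type*} [Ring H] [Algebra k H] (QH : QuasiHopfAlgebra k H)

/-- The map `b ⊗ c ↦ S⁻¹(α c) b`. -/
def mulSinvAlpha : H ⊗[k] H →ₗ[k] H :=
  LinearMap.mul' k H ∘ₗ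
    TensorProduct.map (QH.Sinv ∘ₗ LinearMap.mulLeft k QH.aE) LinearMap.id ∘ₗ
    (TensorProduct.comm k H H).toLinearMap

@[simp]
theorem mulSinvAlpha_tmul (b c : H) :
    QH.mulSinvAlpha (b ⊗ₜ[k] c) = QH.Sinv (QH.aE * c) * b := by
  simp [mulSinvAlpha]

theorem mulSinvAlpha_comul_mul (h : H) (w : H ⊗[k] H) :
    QH.mulSinvAlpha (QH.comul h * w) = QH.counit h • QH.mulSinvAlpha w := by
  induction w using TensorProduct.induction_on with
  | zero => simp
  | add x x' hx hx' => simp only [mul_add, map_add, hx, hx', smul_add]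
  | tmul b c =>
    have e := congrArg QH.Sinv (QH.sum_antipode_left_mul h c)
    simp only [map_sum, map_smul] at e
    simp only [QH.hcomul, Finset.sum_mul, Algebra.TensorProduct.tmul_mul_tmul, map_sum,
      mulSinvAlpha_tmul]
    rw [← smul_mul_assoc, ← e, Finset.sum_mul]
    simp only [QH.Sinv_mul, QH.Sinv_S, mul_assoc]

variable (A : Type*) [Ring A] [Algebra k A]

/-- The map `a ⊗ h ↦ S⁻¹(h) ⊗ a`. -/
def flipSinv : A ⊗[k] H →ₗ[k] H ⊗[k] A :=
  (TensorProduct.comm k A H).toLinearMap ∘ₗ TensorProduct.map LinearMap.id QH.Sinv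

variable {A}

@[simp]
theorem flipSinv_tmul (a : A) (h : H) : QH.flipSinv A (a ⊗ₜ[k] h) = QH.Sinv h ⊗ₜ[k] a := by
  simp [flipSinv]

theorem flipSinv_mul_one_tmul (t : A ⊗[k] H) (h : H) :
    QH.flipSinv A (t * (1 : A) ⊗ₜ[k] QH.S h) = h ⊗ₜ[k] (1 : A) * QH.flipSinv A t := by
  induction t using TensorProduct.induction_on with
  | zero => simp
  | add x x' hx hx' => simp only [add_mul, mul_add, map_add, hx, hx']
  | tmul b c => simp [QH.Sinv_mul, QH.Sinv_S]

theorem flipSinv_mul_tmul_one (t : A ⊗[k] H) (a : A) :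
    QH.flipSinv A (t * a ⊗ₜ[k] (1 : H)) = QH.flipSinv A t * (1 : H) ⊗ₜ[k] a := by
  induction t using TensorProduct.induction_on with
  | zero => simp
  | add x x' hx hx' => simp only [add_mul, map_add, hx, hx']
  | tmul b c => simp

theorem map_mulBetaAlpha_legThree_mul (z w) :
    TensorProduct.map LinearMap.id QH.mulBetaAlpha (legThree A QH.comul z * w) =
      TensorProduct.map LinearMap.id QH.mulBetaAlpha
        (legThree A (unitCounit QH.counit) z * w) := by
  refine map_mul_eq_of_tmul _ _ _ (fun a b c a' b' c' d' => ?_) z w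
  simp only [legThree_sum _ _ _ (QH.hcomul _), Finset.sum_mul, map_sum, legThree_unitCounit,
    Algebra.TensorProduct.tmul_mul_tmul, TensorProduct.map_tmul, mulBetaAlpha_tmul, QH.S_mul,
    mul_assoc, smul_mul_assoc, map_smul, one_mul]
  simp only [← tmul_sum, ← Finset.mul_sum, QH.sum_antipode_left_mul, mul_smul_comm, tmul_smul]

theorem map_mulBetaAlpha_mul_legTwo (z w) :
    TensorProduct.map LinearMap.id QH.mulBetaAlpha (w * legTwo A QH.comul z) =
      TensorProduct.map LinearMap.id QH.mulBetaAlpha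
        (w * legTwo A (unitCounit QH.counit) z) := by
  refine mul_map_eq_of_tmul _ _ _ (fun a b c a' b' c' d' => ?_) z w
  simp only [legTwo_sum _ _ _ (QH.hcomul _), Finset.mul_sum, map_sum, legTwo_unitCounit,
    Algebra.TensorProduct.tmul_mul_tmul, TensorProduct.map_tmul, mulBetaAlpha_tmul, QH.S_mul,
    mul_assoc, mul_smul_comm, map_smul]
  simp only [← tmul_sum, ← Finset.mul_sum, QH.sum_antipode_right_mul, QH.S_one, one_mul,
    mul_smul_comm, tmul_smul]

theorem map_mulAlphaBeta_legTwo_mul (z w) :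
    TensorProduct.map LinearMap.id QH.mulAlphaBeta (legTwo A QH.comul z * w) =
      TensorProduct.map LinearMap.id QH.mulAlphaBeta
        (legTwo A (unitCounit QH.counit) z * w) := by
  refine map_mul_eq_of_tmul _ _ _ (fun a b c a' b' c' d' => ?_) z w
  simp only [legTwo_sum _ _ _ (QH.hcomul _), Finset.sum_mul, map_sum, legTwo_unitCounit,
    Algebra.TensorProduct.tmul_mul_tmul, TensorProduct.map_tmul, mulAlphaBeta_tmul, QH.S_mul,
    mul_assoc, smul_mul_assoc, map_smul, ← tmul_sum, ← Finset.mul_sum, QH.sum_antipode_left_mul,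
    one_mul, mul_smul_comm, tmul_smul]

theorem map_mulAlphaBeta_mul_legThree (z w) :
    TensorProduct.map LinearMap.id QH.mulAlphaBeta (w * legThree A QH.comul z) =
      TensorProduct.map LinearMap.id QH.mulAlphaBeta
        (w * legThree A (unitCounit QH.counit) z) := by
  refine mul_map_eq_of_tmul _ _ _ (fun a b c a' b' c' d' => ?_) z w
  simp only [legThree_sum _ _ _ (QH.hcomul _), Finset.mul_sum, map_sum, legThree_unitCounit,
    Algebra.TensorProduct.tmul_mul_tmul, TensorProduct.map_tmul, mulAlphaBeta_tmul, QH.S_mul,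
    mul_assoc, mul_smul_comm, map_smul]
  simp only [← tmul_sum, ← Finset.mul_sum, QH.sum_antipode_right_mul, QH.S_one, one_mul,
    mul_smul_comm, tmul_smul]

end QuasiHopfAlgebra

namespace RightComoduleAlgebra

variable {k : Type*} [Field k] {H : Type*} [Ring H] [Algebra k H] {QH : QuasiHopfAlgebra k H}
  {A : Type*} [Ring A] [Algebra k A] (CA : RightComoduleAlgebra QH.toQuasiBialgebra A)

/-- The element `p̃_ρ`. -/
def pTilde : A ⊗[k] H := TensorProduct.map LinearMap.id QH.mulBeta CA.reassocInv

/-- The element `q̃_ρ`. -/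
def qTilde : A ⊗[k] H := TensorProduct.map LinearMap.id QH.mulSinvAlpha CA.reassoc

theorem sum_smul_mul_eq {M : Type*} [AddCommGroup M] [Module k M] (f : A →ₗ[k] M) (a : A) :
    ∑ i ∈ range CA.nR, QH.counit (CA.r1 a i) • f (CA.r0 a i) = f a := by
  conv_rhs => rw [← CA.rca3 a]
  simp only [map_sum, map_smul]

theorem map_mulBeta_legOneTwo_mul (a : A) (h : H) (w : A ⊗[k] (H ⊗[k] H)) :
    TensorProduct.map LinearMap.id QH.mulBeta (legOneTwo CA.rho (a ⊗ₜ[k] h) * w) =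
      CA.rho a * TensorProduct.map LinearMap.id QH.mulBeta w * (1 : A) ⊗ₜ[k] QH.S h := by
  have : TensorProduct.map LinearMap.id QH.mulBeta ∘ₗ
      LinearMap.mulLeft k (legOneTwo CA.rho (a ⊗ₜ[k] h)) =
      LinearMap.mulRight k ((1 : A) ⊗ₜ[k] QH.S h) ∘ₗ LinearMap.mulLeft k (CA.rho a) ∘ₗ
        TensorProduct.map LinearMap.id QH.mulBeta :=
    linearMap_ext_three fun a' b c => by
      simp [legOneTwo_sum _ _ _ (CA.hrho _), CA.hrho a, Finset.sum_mul, QH.S_mul, mul_assoc]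
  exact LinearMap.congr_fun this w

theorem map_mulBeta_mul_map_comul (a : A) (w : A ⊗[k] (H ⊗[k] H)) :
    TensorProduct.map LinearMap.id QH.mulBeta
        (w * Algebra.TensorProduct.map (AlgHom.id k A) QH.comul (CA.rho a)) =
      TensorProduct.map LinearMap.id QH.mulBeta w * a ⊗ₜ[k] (1 : H) := by
  induction w using TensorProduct.induction_on with
  | zero => simp
  | add x x' hx hx' => simp only [add_mul, map_add, hx, hx']
  | tmul b z =>
    have e := CA.sum_smul_mul_eq ((TensorProduct.mk k A H).flip (QH.mulBeta z) ∘ₗ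
      LinearMap.mulLeft k b) a
    simp only [LinearMap.comp_apply, LinearMap.mulLeft_apply, LinearMap.flip_apply,
      TensorProduct.mk_apply] at e
    simp only [TensorProduct.map_tmul, LinearMap.id_apply, Algebra.TensorProduct.tmul_mul_tmul,
      mul_one, ← e]
    rw [CA.hrho a]
    simp [Finset.mul_sum, QH.mulBeta_mul_comul]

theorem sum_rho_mul_pTilde_mul (a : A) :
    ∑ i ∈ range CA.nR, CA.rho (CA.r0 a i) * CA.pTilde * (1 : A) ⊗ₜ[k] QH.S (CA.r1 a i) =
      CA.pTilde * a ⊗ₜ[k] (1 : H) := by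
  rw [pTilde, ← map_mulBeta_mul_map_comul, ← legOneTwo_mul_reassocInv]
  conv_rhs => rw [CA.hrho a, map_sum, Finset.sum_mul, map_sum]
  simp only [map_mulBeta_legOneTwo_mul]

theorem map_mulSinvAlpha_mul_legOneTwo (a : A) (h : H) (w : A ⊗[k] (H ⊗[k] H)) :
    TensorProduct.map LinearMap.id QH.mulSinvAlpha (w * legOneTwo CA.rho (a ⊗ₜ[k] h)) =
      (1 : A) ⊗ₜ[k] QH.Sinv h * TensorProduct.map LinearMap.id QH.mulSinvAlpha w * CA.rho a := by
  have : TensorProduct.map LinearMap.id QH.mulSinvAlpha ∘ₗ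
      LinearMap.mulRight k (legOneTwo CA.rho (a ⊗ₜ[k] h)) =
      LinearMap.mulRight k (CA.rho a) ∘ₗ LinearMap.mulLeft k ((1 : A) ⊗ₜ[k] QH.Sinv h) ∘ₗ
        TensorProduct.map LinearMap.id QH.mulSinvAlpha :=
    linearMap_ext_three fun a' b c => by
      simp [legOneTwo_sum _ _ _ (CA.hrho _), CA.hrho a, Finset.mul_sum, QH.Sinv_mul, mul_assoc]
  exact LinearMap.congr_fun this w

theorem map_mulSinvAlpha_map_comul_mul (a : A) (w : A ⊗[k] (H ⊗[k] H)) :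
    TensorProduct.map LinearMap.id QH.mulSinvAlpha
        (Algebra.TensorProduct.map (AlgHom.id k A) QH.comul (CA.rho a) * w) =
      a ⊗ₜ[k] (1 : H) * TensorProduct.map LinearMap.id QH.mulSinvAlpha w := by
  induction w using TensorProduct.induction_on with
  | zero => simp
  | add x x' hx hx' => simp only [mul_add, map_add, hx, hx']
  | tmul b z =>
    have e := CA.sum_smul_mul_eq ((TensorProduct.mk k A H).flip (QH.mulSinvAlpha z) ∘ₗ
      LinearMap.mulRight k b) a
    simp only [LinearMap.comp_apply, LinearMap.mulRight_apply, LinearMap.flip_apply,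
      TensorProduct.mk_apply] at e
    simp only [TensorProduct.map_tmul, LinearMap.id_apply, Algebra.TensorProduct.tmul_mul_tmul,
      one_mul, ← e]
    rw [CA.hrho a]
    simp [Finset.sum_mul, QH.mulSinvAlpha_comul_mul]

theorem sum_mul_qTilde_mul_rho (a : A) :
    ∑ i ∈ range CA.nR, (1 : A) ⊗ₜ[k] QH.Sinv (CA.r1 a i) * CA.qTilde * CA.rho (CA.r0 a i) =
      a ⊗ₜ[k] (1 : H) * CA.qTilde := by
  rw [qTilde, ← map_mulSinvAlpha_map_comul_mul, ← reassoc_mul_legOneTwo]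
  conv_rhs => rw [CA.hrho a, map_sum, Finset.mul_sum, map_sum]
  simp only [map_mulSinvAlpha_mul_legOneTwo]

/-- The map `θ(a ⊗ h) = ∑ h S⁻¹(a⟨1⟩ p̃²) ⊗ a⟨0⟩ p̃¹`. -/
def theta : A ⊗[k] H →ₗ[k] H ⊗[k] A :=
  LinearMap.mul' k (H ⊗[k] A) ∘ₗ
    TensorProduct.map Algebra.TensorProduct.includeLeft.toLinearMap
      (QH.flipSinv A ∘ₗ LinearMap.mulRight k CA.pTilde ∘ₗ CA.rho.toLinearMap) ∘ₗ
    (TensorProduct.comm k A H).toLinearMap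

/-- The map `θ⁻¹(h ⊗ a) = ∑ q̃¹ a⟨0⟩ ⊗ h q̃² a⟨1⟩`. -/
def thetaInv : H ⊗[k] A →ₗ[k] A ⊗[k] H :=
  LinearMap.mul' k (A ⊗[k] H) ∘ₗ
    TensorProduct.map Algebra.TensorProduct.includeRight.toLinearMap
      (LinearMap.mulLeft k CA.qTilde ∘ₗ CA.rho.toLinearMap)

theorem theta_tmul (a : A) (h : H) :
    CA.theta (a ⊗ₜ[k] h) = h ⊗ₜ[k] (1 : A) * QH.flipSinv A (CA.rho a * CA.pTilde) := by
  simp [theta]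

theorem thetaInv_tmul (h : H) (a : A) :
    CA.thetaInv (h ⊗ₜ[k] a) = (1 : A) ⊗ₜ[k] h * CA.qTilde * CA.rho a := by
  simp [thetaInv, mul_assoc]

theorem theta_one_tmul_mul (h : H) (t : A ⊗[k] H) :
    CA.theta ((1 : A) ⊗ₜ[k] h * t) = h ⊗ₜ[k] (1 : A) * CA.theta t := by
  induction t using TensorProduct.induction_on with
  | zero => simp
  | add x x' hx hx' => simp only [mul_add, map_add, hx, hx']
  | tmul b c =>
    rw [Algebra.TensorProduct.tmul_mul_tmul, theta_tmul, theta_tmul, ← mul_assoc,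
      Algebra.TensorProduct.tmul_mul_tmul, one_mul, one_mul]

theorem theta_mul_rho (t : A ⊗[k] H) (a : A) :
    CA.theta (t * CA.rho a) = CA.theta t * (1 : H) ⊗ₜ[k] a := by
  induction t using TensorProduct.induction_on with
  | zero => simp
  | add x x' hx hx' => simp only [add_mul, map_add, hx, hx']
  | tmul b h =>
    rw [theta_tmul, mul_assoc, ← QH.flipSinv_mul_tmul_one, mul_assoc, ← sum_rho_mul_pTilde_mul]
    conv_lhs => rw [CA.hrho a]
    simp only [Finset.mul_sum, map_sum]
    refine Finset.sum_congr rfl fun i _ => ?_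
    rw [Algebra.TensorProduct.tmul_mul_tmul, theta_tmul, ← mul_assoc, QH.flipSinv_mul_one_tmul,
      ← mul_assoc, Algebra.TensorProduct.tmul_mul_tmul, one_mul, map_mul CA.rho, mul_assoc]

theorem thetaInv_tmul_one_mul (h : H) (u : H ⊗[k] A) :
    CA.thetaInv (h ⊗ₜ[k] (1 : A) * u) = (1 : A) ⊗ₜ[k] h * CA.thetaInv u := by
  induction u using TensorProduct.induction_on with
  | zero => simp
  | add x x' hx hx' => simp only [mul_add, map_add, hx, hx']
  | tmul b c =>
    rw [Algebra.TensorProduct.tmul_mul_tmul, thetaInv_tmul, thetaInv_tmul, ← mul_assoc,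
      ← mul_assoc, Algebra.TensorProduct.tmul_mul_tmul, one_mul, one_mul]

theorem thetaInv_mul_one_tmul (u : H ⊗[k] A) (a : A) :
    CA.thetaInv (u * (1 : H) ⊗ₜ[k] a) = CA.thetaInv u * CA.rho a := by
  induction u using TensorProduct.induction_on with
  | zero => simp
  | add x x' hx hx' => simp only [add_mul, map_add, hx, hx']
  | tmul b c =>
    rw [Algebra.TensorProduct.tmul_mul_tmul, thetaInv_tmul, thetaInv_tmul, map_mul, mul_one,
      mul_assoc, mul_assoc, mul_assoc]

theorem thetaInv_flipSinv_rho_mul (a : A) (t : A ⊗[k] H) :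
    CA.thetaInv (QH.flipSinv A (CA.rho a * t)) =
      a ⊗ₜ[k] (1 : H) * CA.thetaInv (QH.flipSinv A t) := by
  induction t using TensorProduct.induction_on with
  | zero => simp
  | add x x' hx hx' => simp only [mul_add, map_add, hx, hx']
  | tmul b h =>
    have e : a ⊗ₜ[k] (1 : H) * (1 : A) ⊗ₜ[k] QH.Sinv h =
        (1 : A) ⊗ₜ[k] QH.Sinv h * a ⊗ₜ[k] (1 : H) := by simp
    rw [QH.flipSinv_tmul, thetaInv_tmul, ← mul_assoc, ← mul_assoc, e,
      mul_assoc ((1 : A) ⊗ₜ[k] QH.Sinv h), ← sum_mul_qTilde_mul_rho]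
    conv_lhs => rw [CA.hrho a]
    simp only [Finset.mul_sum, Finset.sum_mul, map_sum]
    refine Finset.sum_congr rfl fun i _ => ?_
    rw [Algebra.TensorProduct.tmul_mul_tmul, QH.flipSinv_tmul, thetaInv_tmul, QH.Sinv_mul,
      map_mul, ← mul_assoc, ← mul_assoc, ← mul_assoc, Algebra.TensorProduct.tmul_mul_tmul, one_mul]

theorem theta_map_mulSinvAlpha (z : A ⊗[k] (H ⊗[k] H)) :
    CA.theta (TensorProduct.map LinearMap.id QH.mulSinvAlpha z) =
      QH.flipSinv A (TensorProduct.map LinearMap.id QH.mulBetaAlpha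
        (legOne CA.rho z * tensorOne k H A CA.reassocInv)) := by
  have key : ∀ (a : A) (b c : H) (w : A ⊗[k] (H ⊗[k] H)),
      TensorProduct.map LinearMap.id QH.mulBetaAlpha
        (legOne CA.rho (a ⊗ₜ[k] (b ⊗ₜ[k] c)) * tensorOne k H A w) =
      CA.rho a * TensorProduct.map LinearMap.id QH.mulBeta w *
        (1 : A) ⊗ₜ[k] QH.S (QH.Sinv (QH.aE * c) * b) := by
    intro a b c w
    have : TensorProduct.map LinearMap.id QH.mulBetaAlpha ∘ₗ
        LinearMap.mulLeft k (legOne CA.rho (a ⊗ₜ[k] (b ⊗ₜ[k] c))) ∘ₗ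
          (tensorOne k H A).toLinearMap =
        LinearMap.mulRight k ((1 : A) ⊗ₜ[k] QH.S (QH.Sinv (QH.aE * c) * b)) ∘ₗ
          LinearMap.mulLeft k (CA.rho a) ∘ₗ TensorProduct.map LinearMap.id QH.mulBeta :=
      linearMap_ext_three fun a' b' c' => by
        simp [legOne_sum _ _ _ (CA.hrho _), CA.hrho a, Finset.sum_mul, QH.S_mul, QH.S_Sinv,
          mul_assoc]
    exact LinearMap.congr_fun this w
  have : CA.theta ∘ₗ TensorProduct.map LinearMap.id QH.mulSinvAlpha =
      QH.flipSinv A ∘ₗ TensorProduct.map LinearMap.id QH.mulBetaAlpha ∘ₗ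
        LinearMap.mulRight k (tensorOne k H A CA.reassocInv) ∘ₗ (legOne CA.rho).toLinearMap := by
    refine linearMap_ext_three fun a b c => ?_
    simp only [LinearMap.comp_apply, LinearMap.mulRight_apply, AlgHom.toLinearMap_apply, key,
      TensorProduct.map_tmul, LinearMap.id_apply, QH.mulSinvAlpha_tmul, theta_tmul,
      QH.flipSinv_mul_one_tmul]
    rfl
  exact LinearMap.congr_fun this z

theorem theta_qTilde : CA.theta CA.qTilde = 1 := by
  have hT : legOne CA.rho CA.reassoc * tensorOne k H A CA.reassocInv =
      legThree A QH.comul CA.reassocInv *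
        (oneTensor k H A QH.reassoc * legTwo A QH.comul CA.reassoc) := by
    have h := congrArg (fun t => legThree A QH.comul CA.reassocInv *
      (t * tensorOne k H A CA.reassocInv)) CA.reassoc_pentagon
    simp only [mul_assoc] at h
    rw [← map_mul (tensorOne k H A), reassoc_mul_inv, map_one, mul_one,
      ← mul_assoc _ (legThree _ _ _), ← map_mul (legThree _ _), reassoc_inv_mul, map_one, one_mul] at h
    exact h.symm
  rw [qTilde, theta_map_mulSinvAlpha, hT, QH.map_mulBetaAlpha_legThree_mul,
    CA.map_reassocInv_eq_one CA.legThree_unitCounit_reassoc, one_mul,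
    QH.map_mulBetaAlpha_mul_legTwo, CA.legTwo_unitCounit_reassoc, mul_one, oneTensor_apply,
    TensorProduct.map_tmul, QH.mulBetaAlpha_reassoc, LinearMap.id_apply, QH.flipSinv_tmul,
    QH.Sinv_one, Algebra.TensorProduct.one_def]

theorem thetaInv_flipSinv_map_mulBeta (z : A ⊗[k] (H ⊗[k] H)) :
    CA.thetaInv (QH.flipSinv A (TensorProduct.map LinearMap.id QH.mulBeta z)) =
      TensorProduct.map LinearMap.id QH.Sinv (TensorProduct.map LinearMap.id QH.mulAlphaBeta
        (tensorOne k H A CA.reassoc * legOne CA.rho z)) := by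
  have key : ∀ (a : A) (b c : H) (w : A ⊗[k] (H ⊗[k] H)),
      TensorProduct.map LinearMap.id QH.Sinv (TensorProduct.map LinearMap.id QH.mulAlphaBeta
        (tensorOne k H A w * legOne CA.rho (a ⊗ₜ[k] (b ⊗ₜ[k] c)))) =
      (1 : A) ⊗ₜ[k] QH.Sinv (b * QH.bE * QH.S c) *
        TensorProduct.map LinearMap.id QH.mulSinvAlpha w * CA.rho a := by
    intro a b c w
    have : TensorProduct.map LinearMap.id QH.Sinv ∘ₗ
        TensorProduct.map LinearMap.id QH.mulAlphaBeta ∘ₗ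
        LinearMap.mulRight k (legOne CA.rho (a ⊗ₜ[k] (b ⊗ₜ[k] c))) ∘ₗ
          (tensorOne k H A).toLinearMap =
        LinearMap.mulRight k (CA.rho a) ∘ₗ
          LinearMap.mulLeft k ((1 : A) ⊗ₜ[k] QH.Sinv (b * QH.bE * QH.S c)) ∘ₗ
          TensorProduct.map LinearMap.id QH.mulSinvAlpha :=
      linearMap_ext_three fun a' b' c' => by
        simp [legOne_sum _ _ _ (CA.hrho _), CA.hrho a, Finset.mul_sum, QH.Sinv_mul, QH.Sinv_S,
          mul_assoc]
    exact LinearMap.congr_fun this w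
  have : CA.thetaInv ∘ₗ QH.flipSinv A ∘ₗ TensorProduct.map LinearMap.id QH.mulBeta =
      TensorProduct.map LinearMap.id QH.Sinv ∘ₗ TensorProduct.map LinearMap.id QH.mulAlphaBeta ∘ₗ
        LinearMap.mulLeft k (tensorOne k H A CA.reassoc) ∘ₗ (legOne CA.rho).toLinearMap := by
    refine linearMap_ext_three fun a b c => ?_
    simp only [LinearMap.comp_apply, LinearMap.mulLeft_apply, AlgHom.toLinearMap_apply, key,
      TensorProduct.map_tmul, LinearMap.id_apply, QH.mulBeta_tmul, QH.flipSinv_tmul, thetaInv_tmul]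
    rfl
  exact LinearMap.congr_fun this z

theorem thetaInv_flipSinv_pTilde : CA.thetaInv (QH.flipSinv A CA.pTilde) = 1 := by
  have hT : tensorOne k H A CA.reassoc * legOne CA.rho CA.reassocInv =
      legTwo A QH.comul CA.reassocInv *
        (oneTensor k H A QH.reassocInv * legThree A QH.comul CA.reassoc) := by
    have h := congrArg (fun t => legTwo A QH.comul CA.reassocInv *
      (oneTensor k H A QH.reassocInv * (t * legOne CA.rho CA.reassocInv))) CA.reassoc_pentagon
    have hX : oneTensor k H A QH.reassocInv * oneTensor k H A
        (∑ s ∈ range QH.nP, QH.X1 s ⊗ₜ[k] (QH.X2 s ⊗ₜ[k] QH.X3 s)) = 1 := by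
      rw [← map_mul]
      exact (congrArg _ QH.reassoc_inv_mul).trans (map_one _)
    simp only [mul_assoc] at h
    rw [← map_mul (legOne _), reassoc_mul_inv, map_one, mul_one,
      ← mul_assoc (oneTensor k H A QH.reassocInv), hX, one_mul, ← mul_assoc (legTwo _ _ _),
      ← map_mul (legTwo _ _), reassoc_inv_mul, map_one, one_mul] at h
    exact h
  rw [pTilde, thetaInv_flipSinv_map_mulBeta, hT, QH.map_mulAlphaBeta_legTwo_mul,
    CA.map_reassocInv_eq_one CA.legTwo_unitCounit_reassoc, one_mul,
    QH.map_mulAlphaBeta_mul_legThree, CA.legThree_unitCounit_reassoc, mul_one, oneTensor_apply,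
    TensorProduct.map_tmul, QH.mulAlphaBeta_reassocInv, TensorProduct.map_tmul, QH.Sinv_one,
    LinearMap.id_apply, LinearMap.id_apply, Algebra.TensorProduct.one_def]

theorem thetaInv_theta (t : A ⊗[k] H) : CA.thetaInv (CA.theta t) = t := by
  induction t using TensorProduct.induction_on with
  | zero => simp
  | add x x' hx hx' => simp only [map_add, hx, hx']
  | tmul a h =>
    rw [theta_tmul, thetaInv_tmul_one_mul, thetaInv_flipSinv_rho_mul, thetaInv_flipSinv_pTilde,
      mul_one, Algebra.TensorProduct.tmul_mul_tmul, one_mul, mul_one]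

theorem theta_thetaInv (u : H ⊗[k] A) : CA.theta (CA.thetaInv u) = u := by
  induction u using TensorProduct.induction_on with
  | zero => simp
  | add x x' hx hx' => simp only [map_add, hx, hx']
  | tmul h a =>
    rw [thetaInv_tmul, theta_mul_rho, theta_one_tmul_mul, theta_qTilde,
      mul_one, Algebra.TensorProduct.tmul_mul_tmul, one_mul, mul_one]

end RightComoduleAlgebra

namespace DrinfeldTwist

variable {k : Type*} [Field k] {H : Type*} [Ring H] [Algebra k H] {QH : QuasiHopfAlgebra k H}
  (DT : DrinfeldTwist QH)

/-- The map `b ⊗ c ⊗ d ↦ (S⁻¹ ⊗ S⁻¹)(τ((1 ⊗ α) q_L Δ(d) f⁻¹)) (b ⊗ c)`, with `τ` the flip. -/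
def qLeftMap : H ⊗[k] (H ⊗[k] H) →ₗ[k] H ⊗[k] H :=
  LinearMap.mul' k (H ⊗[k] H) ∘ₗ (TensorProduct.comm k (H ⊗[k] H) (H ⊗[k] H)).toLinearMap ∘ₗ
    TensorProduct.map LinearMap.id (QH.swapSinv ∘ₗ LinearMap.mulRight k DT.inverse ∘ₗ
      LinearMap.mulLeft k ((1 : H) ⊗ₜ[k] QH.aE * QH.qLeft) ∘ₗ QH.comul.toLinearMap) ∘ₗ
    (TensorProduct.assoc k H H H).symm.toLinearMap

theorem qLeftMap_tmul (b c d : H) :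
    DT.qLeftMap (b ⊗ₜ[k] (c ⊗ₜ[k] d)) =
      QH.swapSinv ((1 : H) ⊗ₜ[k] QH.aE * QH.qLeft * QH.comul d * DT.inverse) * b ⊗ₜ[k] c := by
  simp [qLeftMap, mul_assoc]

theorem sum_qLeftMap_comul (h b c d : H) :
    ∑ i ∈ range QH.nD, DT.qLeftMap (b ⊗ₜ[k] ((QH.D1 h i * c) ⊗ₜ[k] (QH.D2 h i * d))) =
      QH.swapSinv ((1 : H) ⊗ₜ[k] (QH.aE * h) * (QH.qLeft * QH.comul d * DT.inverse)) *
        b ⊗ₜ[k] c := by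
  have e1 : ∀ g : H, b ⊗ₜ[k] (g * c) = QH.swapSinv (QH.S g ⊗ₜ[k] (1 : H)) * b ⊗ₜ[k] c := by
    intro g
    simp [QH.Sinv_S, QH.Sinv_one]
  have e2 : (1 : H) ⊗ₜ[k] (QH.aE * h) * (QH.qLeft * QH.comul d * DT.inverse) =
      (1 : H) ⊗ₜ[k] QH.aE * ((1 : H) ⊗ₜ[k] h * QH.qLeft) * (QH.comul d * DT.inverse) := by
    have : (1 : H) ⊗ₜ[k] (QH.aE * h) = (1 : H) ⊗ₜ[k] QH.aE * (1 : H) ⊗ₜ[k] h := by simp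
    simp only [this, mul_assoc]
  rw [e2, ← QH.sum_S_mul_qLeft_mul_comul, Finset.mul_sum, Finset.sum_mul, map_sum,
    Finset.sum_mul]
  refine Finset.sum_congr rfl fun i _ => ?_
  have e3 : ∀ z : H ⊗[k] H, (1 : H) ⊗ₜ[k] QH.aE * (QH.S (QH.D1 h i) ⊗ₜ[k] (1 : H) * z) =
      QH.S (QH.D1 h i) ⊗ₜ[k] (1 : H) * ((1 : H) ⊗ₜ[k] QH.aE * z) := by
    intro z
    simp only [← mul_assoc, Algebra.TensorProduct.tmul_mul_tmul, one_mul, mul_one]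
  rw [qLeftMap_tmul, e1, ← mul_assoc, ← QH.swapSinv_mul, map_mul QH.comul]
  simp only [mul_assoc, e3]

theorem qLeftMap_reassoc_mul (b c d : H) :
    DT.qLeftMap (QH.reassoc * b ⊗ₜ[k] (c ⊗ₜ[k] d)) =
      QH.comul (QH.Sinv (QH.aE * d)) * b ⊗ₜ[k] c := by
  rw [← DT.swapSinv_gamma_mul, QH.gamma_eq_sum_qLeft]
  simp only [QuasiBialgebra.reassoc, Finset.sum_mul, map_sum, Algebra.TensorProduct.tmul_mul_tmul]
  refine Finset.sum_congr rfl fun s _ => ?_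
  have e1 : (QH.X1 s * b) ⊗ₜ[k] (QH.X2 s * c) =
      QH.swapSinv (QH.S (QH.X2 s) ⊗ₜ[k] QH.S (QH.X1 s)) * b ⊗ₜ[k] c := by
    simp [QH.Sinv_S]
  have e2 : QH.S (QH.X2 s) ⊗ₜ[k] (QH.S (QH.X1 s) * QH.aE) =
      QH.S (QH.X2 s) ⊗ₜ[k] QH.S (QH.X1 s) * (1 : H) ⊗ₜ[k] QH.aE := by simp
  rw [qLeftMap_tmul, e1, ← mul_assoc, ← QH.swapSinv_mul, map_mul QH.comul, e2]
  simp only [mul_assoc]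

end DrinfeldTwist

namespace RightComoduleAlgebra

variable {k : Type*} [Field k] {H : Type*} [Ring H] [Algebra k H] {QH : QuasiHopfAlgebra k H}
  {A : Type*} [Ring A] [Algebra k A] (CA : RightComoduleAlgebra QH.toQuasiBialgebra A)
  (DT : DrinfeldTwist QH)

theorem map_qLeftMap_legTwo_mul_tensorOne (z w : A ⊗[k] (H ⊗[k] H)) :
    TensorProduct.map LinearMap.id DT.qLeftMap
        (oneTensor k H A QH.reassoc * (legTwo A QH.comul z * tensorOne k H A w)) =
      Algebra.TensorProduct.map (AlgHom.id k A) QH.comul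
        (TensorProduct.map LinearMap.id QH.mulSinvAlpha z) * w := by
  have : ((LinearMap.mul k (A ⊗[k] (H ⊗[k] (H ⊗[k] H)))).compl₁₂ (legTwo A QH.comul).toLinearMap
        (tensorOne k H A).toLinearMap).compr₂ (TensorProduct.map LinearMap.id DT.qLeftMap ∘ₗ
          LinearMap.mulLeft k (oneTensor k H A QH.reassoc)) =
      (LinearMap.mul k (A ⊗[k] (H ⊗[k] H))) ∘ₗ
        (Algebra.TensorProduct.map (AlgHom.id k A) QH.comul).toLinearMap ∘ₗ
          TensorProduct.map LinearMap.id QH.mulSinvAlpha := by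
    refine linearMap_ext_three fun a b c => linearMap_ext_three fun a' b' c' => ?_
    simp only [LinearMap.compr₂_apply, LinearMap.compl₁₂_apply, LinearMap.mul_apply',
      LinearMap.comp_apply, LinearMap.mulLeft_apply, AlgHom.toLinearMap_apply]
    simp only [tensorOne_tmul, legTwo_sum _ _ _ (QH.hcomul _), Finset.sum_mul, Finset.mul_sum, map_sum,
      Algebra.TensorProduct.tmul_mul_tmul, oneTensor_apply, TensorProduct.map_tmul,
      DT.qLeftMap_reassoc_mul, LinearMap.id_apply, one_mul, mul_one,
      Algebra.TensorProduct.map_tmul, AlgHom.coe_id, id_eq, QH.mulSinvAlpha_tmul, map_mul]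
    rw [← tmul_sum, ← Finset.mul_sum, QH.hcomul b, mul_assoc, Finset.sum_mul]
    simp only [Algebra.TensorProduct.tmul_mul_tmul]
  exact LinearMap.congr_fun (LinearMap.congr_fun this z) w

theorem map_qLeftMap_legThree_mul_legOne (a a' : A) (b c b' c' : H) :
    TensorProduct.map LinearMap.id DT.qLeftMap
        (legThree A QH.comul (a ⊗ₜ[k] (b ⊗ₜ[k] c)) *
          legOne CA.rho (a' ⊗ₜ[k] (b' ⊗ₜ[k] c'))) =
      ∑ r ∈ range CA.nR, (a * CA.r0 a' r) ⊗ₜ[k]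
        (QH.swapSinv ((1 : H) ⊗ₜ[k] (QH.aE * c) * (QH.qLeft * QH.comul c' * DT.inverse)) *
          (b * CA.r1 a' r) ⊗ₜ[k] b') := by
  simp only [legThree_sum _ _ _ (QH.hcomul _), legOne_sum _ _ _ (CA.hrho _), Finset.mul_sum,
    Finset.sum_mul, Algebra.TensorProduct.tmul_mul_tmul, map_sum, TensorProduct.map_tmul,
    LinearMap.id_apply]
  simp only [← tmul_sum, DT.sum_qLeftMap_comul]

/-- The map `u ⊗ v ↦ S⁻¹(v) ⊗ a ⊗ S⁻¹(u) b`. -/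
def insertSinv (QH : QuasiHopfAlgebra k H) (a : A) (b : H) :
    H ⊗[k] H →ₗ[k] (H ⊗[k] A) ⊗[k] H :=
  TensorProduct.map ((TensorProduct.mk k H A).flip a ∘ₗ QH.Sinv)
    (LinearMap.mulRight k b ∘ₗ QH.Sinv) ∘ₗ (TensorProduct.comm k H H).toLinearMap

@[simp]
theorem insertSinv_tmul (a : A) (b u v : H) :
    insertSinv QH a b (u ⊗ₜ[k] v) = (QH.Sinv v ⊗ₜ[k] a) ⊗ₜ[k] (QH.Sinv u * b) := by
  simp [insertSinv]

/-- The coaction of `𝒰` on `1 ⊗ 1`. -/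
def coactOne : (H ⊗[k] A) ⊗[k] H :=
  ∑ s ∈ range CA.nP, insertSinv QH (CA.P1 s) (CA.P2 s) (QH.qLeft * QH.comul (CA.P3 s) * DT.inverse)

theorem assoc_map_thetaInv_insertSinv (a : A) (b : H) (x : H ⊗[k] H) :
    Algebra.TensorProduct.assoc k k k A H H
        (TensorProduct.map CA.thetaInv LinearMap.id (insertSinv QH a b x)) =
      ∑ s ∈ range CA.nP, ∑ r ∈ range CA.nR, (CA.P1 s * CA.r0 a r) ⊗ₜ[k]
        (QH.swapSinv ((1 : H) ⊗ₜ[k] (QH.aE * CA.P3 s) * x) * (CA.P2 s * CA.r1 a r) ⊗ₜ[k] b) := by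
  induction x using TensorProduct.induction_on with
  | zero => simp
  | add x x' hx hx' =>
    simp only [map_add, hx, hx', mul_add, add_mul, tmul_add, Finset.sum_add_distrib]
  | tmul u v =>
    simp only [insertSinv_tmul, TensorProduct.map_tmul, thetaInv_tmul, qTilde, reassoc, map_sum,
      CA.hrho a, LinearMap.id_apply, QH.mulSinvAlpha_tmul, Finset.mul_sum]
    simp only [Finset.sum_mul, sum_tmul, map_sum, Algebra.TensorProduct.tmul_mul_tmul,
      Algebra.TensorProduct.assoc_tmul, QH.swapSinv_tmul, QH.Sinv_mul, one_mul, mul_assoc]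
    rw [Finset.sum_comm]

theorem assoc_map_thetaInv_coactOne :
    Algebra.TensorProduct.assoc k k k A H H
        (TensorProduct.map CA.thetaInv LinearMap.id (CA.coactOne DT)) =
      Algebra.TensorProduct.map (AlgHom.id k A) QH.comul CA.qTilde * CA.reassoc := by
  rw [qTilde, ← map_qLeftMap_legTwo_mul_tensorOne DT]
  have h := congrArg (TensorProduct.map LinearMap.id DT.qLeftMap) CA.reassoc_pentagon
  rw [mul_assoc] at h
  refine Eq.trans ?_ h.symm
  simp only [reassoc, coactOne, map_sum, assoc_map_thetaInv_insertSinv, Finset.sum_mul]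
  simp only [Finset.mul_sum, map_sum, map_qLeftMap_legThree_mul_legOne]
  rw [Finset.sum_comm]

variable (k H A) in
/-- The algebra map `h ⊗ h' ↦ (h ⊗ 1) ⊗ h'`. -/
def insertMiddleOne : H ⊗[k] H →ₐ[k] (H ⊗[k] A) ⊗[k] H :=
  Algebra.TensorProduct.map (Algebra.TensorProduct.includeLeft : H →ₐ[k] H ⊗[k] A)
    (AlgHom.id k H)

@[simp]
theorem insertMiddleOne_tmul (h h' : H) :
    insertMiddleOne k H A (h ⊗ₜ[k] h') = (h ⊗ₜ[k] (1 : A)) ⊗ₜ[k] h' := by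
  simp [insertMiddleOne]

variable (k H A) in
/-- The algebra map `a ⊗ h ↦ (1 ⊗ a) ⊗ h`. -/
def oneTensorLeft : A ⊗[k] H →ₐ[k] (H ⊗[k] A) ⊗[k] H :=
  Algebra.TensorProduct.map (Algebra.TensorProduct.includeRight : A →ₐ[k] H ⊗[k] A)
    (AlgHom.id k H)

@[simp]
theorem oneTensorLeft_tmul (a : A) (h : H) :
    oneTensorLeft k H A (a ⊗ₜ[k] h) = ((1 : H) ⊗ₜ[k] a) ⊗ₜ[k] h := by
  simp [oneTensorLeft]

theorem assoc_map_thetaInv_mul (x : H ⊗[k] H) (w : (H ⊗[k] A) ⊗[k] H) (y : A ⊗[k] H) :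
    Algebra.TensorProduct.assoc k k k A H H (TensorProduct.map CA.thetaInv LinearMap.id
        (insertMiddleOne k H A x * w *
          oneTensorLeft k H A y)) =
      (1 : A) ⊗ₜ[k] x * Algebra.TensorProduct.assoc k k k A H H
        (TensorProduct.map CA.thetaInv LinearMap.id w) * legOneTwo CA.rho y := by
  induction x using TensorProduct.induction_on with
  | zero => simp
  | add x x' hx hx' => simp only [map_add, add_mul, tmul_add, hx, hx']
  | tmul h h' =>
    induction y using TensorProduct.induction_on with
    | zero => simp
    | add x x' hx hx' => simp only [map_add, mul_add, hx, hx']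
    | tmul a g =>
      induction w using TensorProduct.induction_on with
      | zero => simp
      | add x x' hx hx' => simp only [map_add, mul_add, add_mul, hx, hx']
      | tmul u v =>
        have e1 : (1 : A) ⊗ₜ[k] (h ⊗ₜ[k] h') =
            Algebra.TensorProduct.assoc k k k A H H (((1 : A) ⊗ₜ[k] h) ⊗ₜ[k] h') := by simp
        have e2 : legOneTwo CA.rho (a ⊗ₜ[k] g) =
            Algebra.TensorProduct.assoc k k k A H H (CA.rho a ⊗ₜ[k] g) := by
          simp [legOneTwo]
        rw [e1, e2, ← map_mul, ← map_mul]
        simp [thetaInv_tmul_one_mul, thetaInv_mul_one_tmul]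

theorem assoc_map_thetaInv_coact (h : H) (a : A) :
    Algebra.TensorProduct.assoc k k k A H H (TensorProduct.map CA.thetaInv LinearMap.id
        (insertMiddleOne k H A
            (QH.comul h) * CA.coactOne DT *
          oneTensorLeft k H A
            (CA.rho a))) =
      Algebra.TensorProduct.map (AlgHom.id k A) QH.comul (CA.thetaInv (h ⊗ₜ[k] a)) *
        CA.reassoc := by
  rw [assoc_map_thetaInv_mul, assoc_map_thetaInv_coactOne, ← mul_assoc, mul_assoc,
    reassoc_mul_legOneTwo, thetaInv_tmul, map_mul, map_mul, Algebra.TensorProduct.map_tmul,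
    map_one, ← mul_assoc]

theorem sum_coact_eq (h : H) (a : A) :
    ∑ i ∈ range QH.nD, ∑ s ∈ range CA.nP, ∑ l ∈ range QH.nD,
        ∑ j ∈ range QH.nQ, ∑ t ∈ range DT.nf, ∑ r ∈ range CA.nR,
        ((QH.D1 h i * QH.Sinv (QH.x3 j * QH.D2 (CA.P3 s) l * DT.g2 t)) ⊗ₜ[k]
            (CA.P1 s * CA.r0 a r)) ⊗ₜ[k]
          (QH.D2 h i *
            QH.Sinv ((QH.S (QH.x1 j) * QH.aE * QH.x2 j) * QH.D1 (CA.P3 s) l * DT.g1 t) *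
            (CA.P2 s * CA.r1 a r)) =
      insertMiddleOne k H A
          (QH.comul h) * CA.coactOne DT *
        oneTensorLeft k H A
          (CA.rho a) := by
  have e : CA.coactOne DT = ∑ s ∈ range CA.nP, ∑ l ∈ range QH.nD, ∑ j ∈ range QH.nQ,
      ∑ t ∈ range DT.nf,
        (QH.Sinv (QH.x3 j * QH.D2 (CA.P3 s) l * DT.g2 t) ⊗ₜ[k] CA.P1 s) ⊗ₜ[k]
          (QH.Sinv ((QH.S (QH.x1 j) * QH.aE * QH.x2 j) * QH.D1 (CA.P3 s) l * DT.g1 t) *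
            CA.P2 s) := by
    refine Finset.sum_congr rfl fun s _ => ?_
    rw [QuasiHopfAlgebra.qLeft, QuasiBialgebra.reassocInv, DrinfeldTwist.inverse, QH.hcomul,
      map_sum]
    simp only [Finset.sum_mul, map_sum, QH.mulAlphaLeft_tmul]
    simp only [Finset.mul_sum, Finset.sum_mul, map_sum, Algebra.TensorProduct.tmul_mul_tmul,
      insertSinv_tmul]
    conv_rhs => rw [Finset.sum_comm]
    exact Finset.sum_congr rfl fun j _ => Finset.sum_comm
  rw [e, QH.hcomul h, CA.hrho a, mul_assoc]
  simp only [map_sum, Finset.sum_mul]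
  simp only [Finset.mul_sum, insertMiddleOne_tmul, oneTensorLeft_tmul,
    Algebra.TensorProduct.tmul_mul_tmul, one_mul, mul_one, mul_assoc]

theorem assoc_sum_coact (a : A) (h : H) :
    Algebra.TensorProduct.assoc k k k A H H (∑ i ∈ range QH.nD, ∑ s ∈ range CA.nP,
        ((a * CA.P1 s) ⊗ₜ[k] (QH.D1 h i * CA.P2 s)) ⊗ₜ[k] (QH.D2 h i * CA.P3 s)) =
      Algebra.TensorProduct.map (AlgHom.id k A) QH.comul (a ⊗ₜ[k] h) * CA.reassoc := by
  rw [Algebra.TensorProduct.map_tmul, QH.hcomul h, tmul_sum, reassoc, Finset.sum_mul]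
  simp only [map_sum, Finset.mul_sum, Algebra.TensorProduct.assoc_tmul,
    Algebra.TensorProduct.tmul_mul_tmul, AlgHom.coe_id, id_eq]

theorem theta_tmul_eq_sum (a : A) (h : H) :
    CA.theta (a ⊗ₜ[k] h) =
      ∑ r ∈ range CA.nR, ∑ j ∈ range CA.nQ,
        (h * QH.Sinv (CA.r1 a r * (CA.Q2 j * QH.bE * QH.S (CA.Q3 j)))) ⊗ₜ[k]
          (CA.r0 a r * CA.Q1 j) := by
  rw [theta_tmul, CA.hrho a, pTilde, reassocInv, Finset.sum_mul]
  simp only [map_sum, Finset.mul_sum, TensorProduct.map_tmul, Algebra.TensorProduct.tmul_mul_tmul,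
    QH.flipSinv_tmul, QH.mulBeta_tmul, LinearMap.id_apply, one_mul]

theorem thetaInv_tmul_eq_sum (h : H) (a : A) :
    CA.thetaInv (h ⊗ₜ[k] a) =
      ∑ s ∈ range CA.nP, ∑ r ∈ range CA.nR,
        (CA.P1 s * CA.r0 a r) ⊗ₜ[k]
          (h * (QH.Sinv (QH.aE * CA.P3 s) * CA.P2 s) * CA.r1 a r) := by
  rw [thetaInv_tmul, CA.hrho a, qTilde, reassoc, map_sum, mul_assoc, Finset.sum_mul]
  simp only [Finset.mul_sum, TensorProduct.map_tmul, Algebra.TensorProduct.tmul_mul_tmul,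
    QH.mulSinvAlpha_tmul, LinearMap.id_apply, one_mul, mul_assoc]

variable (TV : TwoSidedHopfModule QH.toQuasiBialgebra CA (A ⊗[k] H))
  (TU : TwoSidedHopfModule QH.toQuasiBialgebra CA (H ⊗[k] A))

theorem theta_linear_left
    (hV : ∀ (h : H) (a : A) (h' : H), TV.ha h (a ⊗ₜ[k] h') = a ⊗ₜ[k] (h * h'))
    (hU : ∀ (h h' : H) (a : A), TU.ha h (h' ⊗ₜ[k] a) = (h * h') ⊗ₜ[k] a)
    (h : H) (m : A ⊗[k] H) : CA.theta (TV.ha h m) = TU.ha h (CA.theta m) := by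
  have eV : ∀ t, TV.ha h t = (1 : A) ⊗ₜ[k] h * t := fun t => by
    induction t using TensorProduct.induction_on with
    | zero => simp
    | add x x' hx hx' => simp only [map_add, mul_add, hx, hx']
    | tmul a g => simp [hV]
  have eU : ∀ t, TU.ha h t = h ⊗ₜ[k] (1 : A) * t := fun t => by
    induction t using TensorProduct.induction_on with
    | zero => simp
    | add x x' hx hx' => simp only [map_add, mul_add, hx, hx']
    | tmul a g => simp [hU]
  rw [eV, eU, theta_one_tmul_mul]

theorem theta_linear_right
    (hV : ∀ (a' a : A) (h : H), TV.ra a' (a ⊗ₜ[k] h) =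
      ∑ i ∈ range CA.nR, (a * CA.r0 a' i) ⊗ₜ[k] (h * CA.r1 a' i))
    (hU : ∀ (a' : A) (h : H) (a : A), TU.ra a' (h ⊗ₜ[k] a) = h ⊗ₜ[k] (a * a'))
    (a : A) (m : A ⊗[k] H) : CA.theta (TV.ra a m) = TU.ra a (CA.theta m) := by
  have eV : ∀ t, TV.ra a t = t * CA.rho a := fun t => by
    induction t using TensorProduct.induction_on with
    | zero => simp
    | add x x' hx hx' => simp only [map_add, add_mul, hx, hx']
    | tmul b g => simp [hV, CA.hrho a, Finset.mul_sum]
  have eU : ∀ t, TU.ra a t = t * (1 : H) ⊗ₜ[k] a := fun t => by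
    induction t using TensorProduct.induction_on with
    | zero => simp
    | add x x' hx hx' => simp only [map_add, add_mul, hx, hx']
    | tmul b g => simp [hU]
  rw [eV, eU, theta_mul_rho]

theorem theta_colinear
    (hV : ∀ (a : A) (h : H), TV.rho (a ⊗ₜ[k] h) =
      ∑ i ∈ range QH.nD, ∑ s ∈ range CA.nP,
        ((a * CA.P1 s) ⊗ₜ[k] (QH.D1 h i * CA.P2 s)) ⊗ₜ[k] (QH.D2 h i * CA.P3 s))
    (hU : ∀ (h : H) (a : A), TU.rho (h ⊗ₜ[k] a) =
      ∑ i ∈ range QH.nD, ∑ s ∈ range CA.nP, ∑ l ∈ range QH.nD,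
        ∑ j ∈ range QH.nQ, ∑ t ∈ range DT.nf, ∑ r ∈ range CA.nR,
        ((QH.D1 h i * QH.Sinv (QH.x3 j * QH.D2 (CA.P3 s) l * DT.g2 t)) ⊗ₜ[k]
            (CA.P1 s * CA.r0 a r)) ⊗ₜ[k]
          (QH.D2 h i *
            QH.Sinv ((QH.S (QH.x1 j) * QH.aE * QH.x2 j) * QH.D1 (CA.P3 s) l * DT.g1 t) *
            (CA.P2 s * CA.r1 a r)))
    (m : A ⊗[k] H) :
    TU.rho (CA.theta m) = TensorProduct.map CA.theta LinearMap.id (TV.rho m) := by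
  have eV : ∀ t, Algebra.TensorProduct.assoc k k k A H H (TV.rho t) =
      Algebra.TensorProduct.map (AlgHom.id k A) QH.comul t * CA.reassoc := fun t => by
    induction t using TensorProduct.induction_on with
    | zero => simp
    | add x x' hx hx' => simp only [map_add, add_mul, hx, hx']
    | tmul a h => rw [hV, assoc_sum_coact]
  have eU : ∀ u, Algebra.TensorProduct.assoc k k k A H H
      (TensorProduct.map CA.thetaInv LinearMap.id (TU.rho u)) =
      Algebra.TensorProduct.map (AlgHom.id k A) QH.comul (CA.thetaInv u) * CA.reassoc := fun u => by
    induction u using TensorProduct.induction_on with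
    | zero => simp
    | add x x' hx hx' => simp only [map_add, add_mul, hx, hx']
    | tmul h a => rw [hU, sum_coact_eq, assoc_map_thetaInv_coact]
  have e : TV.rho m = TensorProduct.map CA.thetaInv LinearMap.id (TU.rho (CA.theta m)) := by
    apply (Algebra.TensorProduct.assoc k k k A H H).injective
    rw [eV, eU, thetaInv_theta]
  have hcomp : CA.theta ∘ₗ CA.thetaInv = LinearMap.id := LinearMap.ext CA.theta_thetaInv
  rw [e, ← LinearMap.comp_apply (TensorProduct.map CA.theta LinearMap.id), ← TensorProduct.map_comp, hcomp, LinearMap.comp_id,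
    TensorProduct.map_id, LinearMap.id_apply]

end RightComoduleAlgebra

end ThetaIsomorphism

/-- With `𝒱 = 𝔄 ⊗ H` and `𝒰 = H ⊗ 𝔄` carrying the two-sided
`(𝔄,H)`-Hopf module structures of the previous statements, the map
`θ(a⊗h) = ∑ h S⁻¹(a⟨1⟩ p̃²ρ) ⊗ a⟨0⟩ p̃¹ρ` is an isomorphism of two-sided
`(𝔄,H)`-Hopf modules, with inverse `θ⁻¹(h⊗a) = ∑ q̃¹ρ a⟨0⟩ ⊗ h q̃²ρ a⟨1⟩`. -/
theorem theta_iso_of_two_sided_hopf_modules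
    {k : Type*} [Field k] {H : Type*} [Ring H] [Algebra k H]
    (QH : QuasiHopfAlgebra k H) (DT : DrinfeldTwist QH)
    {A : Type*} [Ring A] [Algebra k A]
    (CA : RightComoduleAlgebra QH.toQuasiBialgebra A)
    (TV : TwoSidedHopfModule QH.toQuasiBialgebra CA (A ⊗[k] H))
    (hV1 : ∀ (h : H) (a : A) (h' : H), TV.ha h (a ⊗ₜ[k] h') = a ⊗ₜ[k] (h * h'))
    (hV2 : ∀ (a' a : A) (h : H), TV.ra a' (a ⊗ₜ[k] h) =
      ∑ i ∈ Finset.range CA.nR, (a * CA.r0 a' i) ⊗ₜ[k] (h * CA.r1 a' i))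
    (hV3 : ∀ (a : A) (h : H), TV.rho (a ⊗ₜ[k] h) =
      ∑ i ∈ Finset.range QH.nD, ∑ s ∈ Finset.range CA.nP,
        ((a * CA.P1 s) ⊗ₜ[k] (QH.D1 h i * CA.P2 s)) ⊗ₜ[k] (QH.D2 h i * CA.P3 s))
    (TU : TwoSidedHopfModule QH.toQuasiBialgebra CA (H ⊗[k] A))
    (hU1 : ∀ (h h' : H) (a : A), TU.ha h (h' ⊗ₜ[k] a) = (h * h') ⊗ₜ[k] a)
    (hU2 : ∀ (a' : A) (h : H) (a : A), TU.ra a' (h ⊗ₜ[k] a) = h ⊗ₜ[k] (a * a'))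
    (hU3 : ∀ (h : H) (a : A), TU.rho (h ⊗ₜ[k] a) =
      ∑ i ∈ Finset.range QH.nD, ∑ s ∈ Finset.range CA.nP, ∑ l ∈ Finset.range QH.nD,
        ∑ j ∈ Finset.range QH.nQ, ∑ t ∈ Finset.range DT.nf, ∑ r ∈ Finset.range CA.nR,
        ((QH.D1 h i * QH.Sinv (QH.x3 j * QH.D2 (CA.P3 s) l * DT.g2 t)) ⊗ₜ[k]
            (CA.P1 s * CA.r0 a r)) ⊗ₜ[k]
          (QH.D2 h i *
            QH.Sinv ((QH.S (QH.x1 j) * QH.aE * QH.x2 j) * QH.D1 (CA.P3 s) l * DT.g1 t) *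
            (CA.P2 s * CA.r1 a r))) :
    ∃ (θ : A ⊗[k] H →ₗ[k] H ⊗[k] A) (θinv : H ⊗[k] A →ₗ[k] A ⊗[k] H),
      (∀ (a : A) (h : H), θ (a ⊗ₜ[k] h) =
        ∑ r ∈ Finset.range CA.nR, ∑ j ∈ Finset.range CA.nQ,
          (h * QH.Sinv (CA.r1 a r * (CA.Q2 j * QH.bE * QH.S (CA.Q3 j)))) ⊗ₜ[k]
            (CA.r0 a r * CA.Q1 j)) ∧
      (∀ (h : H) (a : A), θinv (h ⊗ₜ[k] a) =
        ∑ s ∈ Finset.range CA.nP, ∑ r ∈ Finset.range CA.nR,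
          (CA.P1 s * CA.r0 a r) ⊗ₜ[k]
            (h * (QH.Sinv (QH.aE * CA.P3 s) * CA.P2 s) * CA.r1 a r)) ∧
      (∀ m, θinv (θ m) = m) ∧ (∀ u, θ (θinv u) = u) ∧
      (∀ (h : H) m, θ (TV.ha h m) = TU.ha h (θ m)) ∧
      (∀ (a : A) m, θ (TV.ra a m) = TU.ra a (θ m)) ∧
      (∀ m, TU.rho (θ m) = (TensorProduct.map θ LinearMap.id) (TV.rho m)) := by
  exact ⟨CA.theta, CA.thetaInv, CA.theta_tmul_eq_sum, CA.thetaInv_tmul_eq_sum,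
    CA.thetaInv_theta, CA.theta_thetaInv, CA.theta_linear_left TV TU hV1 hU1,
    CA.theta_linear_right TV TU hV2 hU2, CA.theta_colinear DT TV TU hV3 hU3⟩
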